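/- arXiv:2111.03744 — 4 statements merged into one kernel-verified Lean document; each statement's English description precedes it below -/
import Mathlib

section
/- (Hierarchical Cutting Lemma, existence part.) For every integer d ≥ 1 there exist constants C (depending only on d) and ρ > 1 such that: for every finite set H of n ≥ 1 hyperplanes in ℝ^d and every real number r with 1 ≤ r ≤ n, setting k = ⌈log_ρ r⌉, there exists a sequence Ξ_1, …, Ξ_k where (i) each Ξ_i is a family of at most C·ρ^{i·d} pairwise disjoint convex subsets of ℝ^d whose union is all of ℝ^d, (ii) every set in Ξ_i is crossed by at most n/ρ^i hyperplanes of H, and (iii) for every i with 1 ≤ i < k, every set of Ξ_i is the union of at most C sets of Ξ_{i+1}. -/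
/-!
The space `ℝ^d` is placed in `V = ℝ^(d + 1)` by `x ↦ (x, 1)`. Hyperplanes become (kernels of) linear
functionals on `V`, and the cells of the cuttings are the traces of relatively open simplicial cones
that partition `V`; see `IsCone`. Working with cones has the advantage that each cell
is the open positive hull of its vertices (extreme rays).

One level is obtained from the previous one by refining each cone separately (`refine_cell`). Let a
cone be cut by at most `ρ θ` functionals. Choose `s` of them at random and triangulate the part of
the arrangement of the sample that lies in the cone, the walls of the cone being added to the
arrangement. A functional that cuts a cell of the triangulation separates two of its vertices. Each
vertex is determined by `d` functionals of the sample or walls, so by a union bound some sample has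
the property that any two such points separated by more than an `ε`-fraction of the functionals are
separated by a functional of the sample (`exists_sample`). Two vertices of one cell are not
separated by the sample, hence each cell is cut by at most `(d + 1)^2 ε ρ θ ≤ θ` functionals.

The triangulation is the pulling triangulation: every face is coned off from a chosen vertex in its
closure (`Code`). A cell corresponds to a chain of faces, and a complete flag of faces is determined
by `d` labels, each a functional with a sign (`FaceFlag.unique`). So there are at most `nF d s`, of
order `s^d`, cells. If no vertex of the sample arrangement lies in the cone, one label can be taken
to be a wall of the cone, which leaves only `nB d s`, of order `s^(d - 1)`, cells (`triangulate`).

With `s` slightly larger than `ρ` one has `2 nB ≤ ρ^d` (`exists_constants`). A cone containing few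
vertices of the whole arrangement admits a sample without vertices in the cone, and is divided into
at most `nB` cells. The other cones are few, because all the cones together contain at most `2 n^d`
vertices (`sum_vertexCount_le`). Hence the recursion
`|Ξ (i + 1)| ≤ nB |Ξ i| + 4 nF s^d ρ^((i + 1) d)`, which keeps `|Ξ i| ≤ C ρ^(i d)` with the same
constant `C` on every level (`IsLevel.step`).
-/

open scoped Classical

/-- A hyperplane in `ℝ^d`: a set of the form `{x | a · x = b}` with `a ≠ 0`. -/
def IsHyperplane {d : ℕ} (h : Set (Fin d → ℝ)) : Prop :=
  ∃ (a : Fin d → ℝ) (b : ℝ), a ≠ 0 ∧ h = {x | ∑ i, a i * x i = b}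

/-- A hyperplane `h` crosses a set `Δ` if `h ∩ Δ ≠ ∅` and `Δ ⊄ h`. -/
def Crosses {α : Type*} (h Δ : Set α) : Prop :=
  (h ∩ Δ).Nonempty ∧ ¬ Δ ⊆ h

set_option linter.unusedSectionVars false

/-! ### Faces of a central arrangement -/

section Arrangement

variable {V κ : Type} [AddCommGroup V] [Module ℝ V] [Fintype κ] (φ : κ → V →ₗ[ℝ] ℝ)

/-- `y` lies in the closure of the face of `x`, where the faces of the arrangement `φ` are the
sets of points with a given sign vector. -/
def Below (y x : V) : Prop :=
  ∀ k, (φ k x = 0 → φ k y = 0) ∧ (0 < φ k x → 0 ≤ φ k y) ∧ (φ k x < 0 → φ k y ≤ 0)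

/-- The sign vector of `x`: it names the face of the arrangement containing `x`. -/
noncomputable def sg (x : V) : κ → SignType := fun k => SignType.sign (φ k x)

/-- The functionals that do not vanish at `x`. -/
noncomputable def supp (x : V) : Finset κ := Finset.univ.filter fun k => φ k x ≠ 0

/-- The linear span of the face of `x`, described as the common kernel of the functionals that
vanish at `x`. -/
def Flat (x : V) : Submodule ℝ V where
  carrier := {w | ∀ k, φ k x = 0 → φ k w = 0}
  add_mem' := by
    intro a b ha hb k hk
    simp [ha k hk, hb k hk]
  zero_mem' := by simp
  smul_mem' := by
    intro c a ha k hk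
    simp [ha k hk]

/-- `p` spans a one-dimensional face (an extreme ray; projectively, a vertex of the arrangement). -/
def IsVertex (p : V) : Prop := p ≠ 0 ∧ ∀ z, Below φ z p → ∃ c : ℝ, z = c • p

variable {φ}

lemma mem_Flat {x w : V} : w ∈ Flat φ x ↔ ∀ k, φ k x = 0 → φ k w = 0 := Iff.rfl

lemma self_mem_Flat (x : V) : x ∈ Flat φ x := fun _ h => h

lemma sign_real_eq_iff {a b : ℝ} : SignType.sign a = SignType.sign b ↔
    (a = 0 ↔ b = 0) ∧ (0 < a ↔ 0 < b) ∧ (a < 0 ↔ b < 0) := by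
  constructor
  · intro h
    refine ⟨?_, ?_, ?_⟩
    · rw [← sign_eq_zero_iff, h, sign_eq_zero_iff]
    · rw [← sign_eq_one_iff, h, sign_eq_one_iff]
    · rw [← sign_eq_neg_one_iff, h, sign_eq_neg_one_iff]
  · rintro ⟨h0, h1, h2⟩
    rcases lt_trichotomy a 0 with h | h | h
    · rw [sign_neg h, sign_neg (h2.1 h)]
    · rw [h, h0.1 h]
    · rw [sign_pos h, sign_pos (h1.1 h)]

lemma sg_eq_iff {x y : V} : sg φ x = sg φ y ↔
    ∀ k, (φ k x = 0 ↔ φ k y = 0) ∧ (0 < φ k x ↔ 0 < φ k y) ∧ (φ k x < 0 ↔ φ k y < 0) := by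
  rw [funext_iff]
  exact forall_congr' fun k => sign_real_eq_iff

lemma Below.refl (x : V) : Below φ x x := fun _ => ⟨id, le_of_lt, le_of_lt⟩

lemma Below.trans {x y z : V} (h : Below φ z y) (h' : Below φ y x) : Below φ z x := by
  intro k
  obtain ⟨a, b, c⟩ := h k
  obtain ⟨a', b', c'⟩ := h' k
  refine ⟨fun h => a (a' h), fun h => ?_, fun h => ?_⟩
  · rcases (b' h).lt_or_eq with h1 | h1
    · exact b h1
    · exact (a h1.symm).ge
  · rcases (c' h).lt_or_eq with h1 | h1
    · exact c h1
    · exact (a h1).le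

lemma Below.of_sg_eq {x y : V} (h : sg φ y = sg φ x) : Below φ y x := by
  rw [sg_eq_iff] at h
  intro k
  obtain ⟨a, b, c⟩ := h k
  exact ⟨a.2, fun h => (b.2 h).le, fun h => (c.2 h).le⟩

lemma Below.pos {x y : V} (h : Below φ y x) {k : κ} (hk : 0 < φ k y) : 0 < φ k x := by
  obtain ⟨a, b, c⟩ := h k
  rcases lt_trichotomy (φ k x) 0 with h | h | h
  · linarith [c h]
  · linarith [a h]
  · exact h

lemma Below.neg {x y : V} (h : Below φ y x) {k : κ} (hk : φ k y < 0) : φ k x < 0 := by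
  obtain ⟨a, b, c⟩ := h k
  rcases lt_trichotomy (φ k x) 0 with h | h | h
  · exact h
  · linarith [a h]
  · linarith [b h]

lemma Below.antisymm {x y : V} (h : Below φ y x) (h' : ∀ k, φ k y = 0 → φ k x = 0) :
    sg φ y = sg φ x := by
  rw [sg_eq_iff]
  intro k
  refine ⟨⟨h' k, (h k).1⟩, ⟨h.pos, fun hx => ?_⟩, ⟨h.neg, fun hx => ?_⟩⟩
  · rcases ((h k).2.1 hx).lt_or_eq with h1 | h1
    · exact h1
    · linarith [h' k h1.symm]
  · rcases ((h k).2.2 hx).lt_or_eq with h1 | h1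
    · exact h1
    · linarith [h' k h1]

lemma Below.exists_of_ne {x y : V} (h : Below φ y x) (hne : sg φ y ≠ sg φ x) :
    ∃ k, φ k y = 0 ∧ φ k x ≠ 0 := by
  by_contra! hc
  exact hne (h.antisymm hc)

lemma Below.supp_subset {x y : V} (h : Below φ y x) : supp φ y ⊆ supp φ x := by
  intro k
  simp only [supp, Finset.mem_filter, Finset.mem_univ, true_and]
  exact mt (h k).1

lemma Below.supp_lt {x y : V} (h : Below φ y x) {k : κ} (hy : φ k y = 0) (hx : φ k x ≠ 0) :
    (supp φ y).card < (supp φ x).card := by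
  apply Finset.card_lt_card
  rw [Finset.ssubset_iff_of_subset h.supp_subset]
  exact ⟨k, by simp [supp, hx], by simp [supp, hy]⟩

/-- Ray shooting: moving from `x` in the direction `-z`, halt at the first `t` at which a
functional of `L` becomes zero. This `t` is the smallest quotient `φ k x / φ k z` among
the functionals that have the same nonzero sign at `x` and at `z`. -/
lemma exists_shoot (L : Finset κ) (x z : V) (h : ∃ k ∈ L, 0 < φ k x * φ k z) :
    ∃ t : ℝ, 0 < t ∧ (∃ k ∈ L, φ k (x - t • z) = 0 ∧ φ k x ≠ 0) ∧
      ∀ k ∈ L, (0 < φ k x → 0 ≤ φ k (x - t • z)) ∧ (φ k x < 0 → φ k (x - t • z) ≤ 0) := by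
  obtain ⟨k0, hk0, hmin⟩ := Finset.exists_min_image (L.filter fun k => 0 < φ k x * φ k z)
    (fun k => φ k x / φ k z) (by obtain ⟨k, hk, h⟩ := h; exact ⟨k, by simp [hk, h]⟩)
  simp only [Finset.mem_filter] at hk0 hmin
  obtain ⟨hk0L, hk0⟩ := hk0
  have hz0 : φ k0 z ≠ 0 := fun h => by simp [h] at hk0
  have hx0 : φ k0 x ≠ 0 := fun h => by simp [h] at hk0
  have ht : 0 < φ k0 x / φ k0 z := div_pos_iff.2 (mul_pos_iff.1 hk0)
  refine ⟨φ k0 x / φ k0 z, ht, ⟨k0, hk0L, ?_, hx0⟩, ?_⟩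
  · simp only [map_sub, map_smul, smul_eq_mul]
    field_simp
    ring
  · intro k hk
    simp only [map_sub, map_smul, smul_eq_mul]
    set t := φ k0 x / φ k0 z with htdef
    constructor
    · intro hx
      rcases le_or_gt (φ k z) 0 with h1 | h1
      · nlinarith
      · have := hmin k ⟨hk, by positivity⟩
        rw [le_div_iff₀ h1] at this
        linarith
    · intro hx
      rcases le_or_gt 0 (φ k z) with h1 | h1
      · nlinarith
      · have := hmin k ⟨hk, by nlinarith⟩
        rw [le_div_iff_of_neg h1] at this
        linarith

/-- A small enough perturbation keeps all the strict signs. -/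
lemma exists_small (z v : V) : ∃ ε : ℝ, 0 < ε ∧
    ∀ k, (0 < φ k z → 0 < φ k (z + ε • v)) ∧ (φ k z < 0 → φ k (z + ε • v) < 0) := by
  have h : ∀ᶠ ε in nhdsWithin (0 : ℝ) (Set.Ioi 0), 0 < ε ∧
      ∀ k, (0 < φ k z → 0 < φ k (z + ε • v)) ∧ (φ k z < 0 → φ k (z + ε • v) < 0) := by
    refine (eventually_mem_nhdsWithin).and (Filter.eventually_all.2 fun k => ?_)
    have hc : Filter.Tendsto (fun ε : ℝ => φ k (z + ε • v)) (nhdsWithin 0 (Set.Ioi 0))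
        (nhds (φ k z)) := by
      have : Continuous (fun ε : ℝ => φ k (z + ε • v)) := by
        simp only [map_add, map_smul, smul_eq_mul]
        fun_prop
      have h2 := this.tendsto 0
      simp only [zero_smul, add_zero] at h2
      exact h2.mono_left nhdsWithin_le_nhds
    rcases lt_trichotomy (φ k z) 0 with h | h | h
    · filter_upwards [hc.eventually (gt_mem_nhds h)] with ε hε
      exact ⟨fun h' => by linarith, fun _ => hε⟩
    · exact Filter.Eventually.of_forall fun ε => ⟨fun h' => by linarith, fun h' => by linarith⟩
    · filter_upwards [hc.eventually (lt_mem_nhds h)] with ε hε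
      exact ⟨fun _ => hε, fun h' => by linarith⟩
  exact h.exists

/-- Shooting from `x` away from a point `z` in the closure of its face ends on the boundary of
that face. -/
lemma exists_shoot_below {x z : V} (hzx : Below φ z x) (hz : ∃ k, φ k z ≠ 0) :
    ∃ t : ℝ, 0 < t ∧ Below φ (x - t • z) x ∧ ∃ k, φ k (x - t • z) = 0 ∧ φ k x ≠ 0 := by
  obtain ⟨t, ht, ⟨k, -, hk⟩, h⟩ := exists_shoot (φ := φ) Finset.univ x z (by
    obtain ⟨k, hk⟩ := hz
    refine ⟨k, Finset.mem_univ _, ?_⟩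
    rcases lt_or_gt_of_ne hk with h | h
    · exact mul_pos_of_neg_of_neg (hzx.neg h) h
    · exact mul_pos (hzx.pos h) h)
  refine ⟨t, ht, fun k => ⟨fun hx => ?_, (h k (Finset.mem_univ _)).1, (h k (Finset.mem_univ _)).2⟩,
    k, hk⟩
  simp [hx, (hzx k).1 hx]

/-- In an essential arrangement the closure of every nonzero face contains a vertex: otherwise
shooting inside the face reaches a smaller nonzero face. -/
lemma exists_vertex (hess : ∀ w, (∀ k, φ k w = 0) → w = 0) :
    ∀ x : V, x ≠ 0 → ∃ p, IsVertex φ p ∧ Below φ p x := by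
  suffices ∀ n, ∀ x : V, x ≠ 0 → (supp φ x).card = n → ∃ p, IsVertex φ p ∧ Below φ p x from
    fun x hx => this _ x hx rfl
  intro n
  induction n using Nat.strong_induction_on with
  | _ n ih =>
    intro x hx hn
    by_cases hv : IsVertex φ x
    · exact ⟨x, hv, Below.refl x⟩
    simp only [IsVertex, not_and, not_forall, not_exists] at hv
    obtain ⟨z, hz, hzs⟩ := hv hx
    have hz0 : ∃ k, φ k z ≠ 0 := by
      by_contra! hc
      exact hzs 0 (by simp [hess z hc])
    obtain ⟨t, ht, hb, k, hk, hkx⟩ := exists_shoot_below hz hz0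
    obtain ⟨p, hp, hpy⟩ := ih _ (hn ▸ hb.supp_lt hk hkx) (x - t • z) (by
      intro h0
      refine hzs t⁻¹ ?_
      rw [sub_eq_zero] at h0
      rw [h0, smul_smul, inv_mul_cancel₀ ht.ne', one_smul]) rfl
    exact ⟨p, hp, hpy.trans hb⟩

lemma IsVertex.exists_smul_of_mem_Flat {p : V} (hp : IsVertex φ p) {w : V} (hw : w ∈ Flat φ p) :
    ∃ c : ℝ, w = c • p := by
  obtain ⟨ε, hε, h⟩ := exists_small (φ := φ) p w
  have : Below φ (p + ε • w) p := by
    intro k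
    refine ⟨fun hk => ?_, fun hk => ((h k).1 hk).le, fun hk => ((h k).2 hk).le⟩
    simp [hk, hw k hk]
  obtain ⟨c, hc⟩ := hp.2 _ this
  refine ⟨ε⁻¹ * (c - 1), ?_⟩
  have h2 : ε • w = (c - 1) • p := by
    rw [sub_smul, one_smul, ← hc]; abel
  rw [mul_smul, ← h2, smul_smul, inv_mul_cancel₀ hε.ne', one_smul]

/-- Between a face and a proper face of it there is a facet. Here `y` represents the smaller face,
`z` the facet, and the last clause says that `Flat φ z` is the hyperplane cut out of `Flat φ x`
by any functional that vanishes at `z` but not at `x`. -/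
lemma exists_cover {y x : V} (h : Below φ y x) (hne : sg φ y ≠ sg φ x) :
    ∃ z, Below φ y z ∧ Below φ z x ∧ sg φ z ≠ sg φ x ∧
      ∀ τ, φ τ z = 0 → φ τ x ≠ 0 → ∀ w ∈ Flat φ x, φ τ w = 0 → w ∈ Flat φ z := by
  suffices ∀ n, ∀ y, Below φ y x → sg φ y ≠ sg φ x → (supp φ x).card - (supp φ y).card = n →
    ∃ z, Below φ y z ∧ Below φ z x ∧ sg φ z ≠ sg φ x ∧
      ∀ τ, φ τ z = 0 → φ τ x ≠ 0 → ∀ w ∈ Flat φ x, φ τ w = 0 → w ∈ Flat φ z from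
    this _ y h hne rfl
  intro n
  induction n using Nat.strong_induction_on with
  | _ n ih =>
    intro y h hne hn
    -- If `y` is not a facet, a direction inside `Flat φ x` along which `φ τ` is constant leads to
    -- a strictly larger proper face `y + ε • (x - t • u)` above `y`.
    by_cases hmax : ∀ τ, φ τ y = 0 → φ τ x ≠ 0 → ∀ w ∈ Flat φ x, φ τ w = 0 → w ∈ Flat φ y
    · exact ⟨y, Below.refl y, h, hne, hmax⟩
    push Not at hmax
    obtain ⟨τ, hτy, hτx, w, hwx, hτw, hwy⟩ := hmax
    obtain ⟨l, hly, hlw⟩ : ∃ l, φ l y = 0 ∧ φ l w ≠ 0 := by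
      by_contra! hc
      exact hwy hc
    have hlx : φ l x ≠ 0 := fun h0 => hlw (hwx l h0)
    -- replace `w` by `-w` if needed so that the ray from `x` along `-w` meets `ker φ l`
    obtain ⟨u, hux, hτu, hlu⟩ : ∃ u ∈ Flat φ x, φ τ u = 0 ∧ 0 < φ l x * φ l u := by
      rcases lt_or_gt_of_ne (mul_ne_zero hlx hlw) with h1 | h1
      · exact ⟨-w, (Flat φ x).neg_mem hwx, by simp [hτw], by simpa using h1⟩
      · exact ⟨w, hwx, hτw, h1⟩
    obtain ⟨t, ht, ⟨k, hkL, hk, hkx⟩, hL⟩ := exists_shoot (φ := φ)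
      (Finset.univ.filter fun k => φ k y = 0) x u ⟨l, by simp [hly], hlu⟩
    simp only [Finset.mem_filter, Finset.mem_univ, true_and] at hkL hL
    obtain ⟨ε, hε, hs⟩ := exists_small (φ := φ) y (x - t • u)
    have hzero : ∀ k, φ k y = 0 → φ k (y + ε • (x - t • u)) = ε * φ k (x - t • u) := by
      intro k hk; rw [map_add, hk, map_smul, smul_eq_mul, zero_add]
    have hyz : Below φ y (y + ε • (x - t • u)) := by
      intro k
      refine ⟨fun h0 => ?_, fun h0 => ?_, fun h0 => ?_⟩
      · rcases lt_trichotomy (φ k y) 0 with h1 | h1 | h1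
        · linarith [(hs k).2 h1]
        · exact h1
        · linarith [(hs k).1 h1]
      · by_contra! h1
        linarith [(hs k).2 h1]
      · by_contra! h1
        linarith [(hs k).1 h1]
    have hzx : Below φ (y + ε • (x - t • u)) x := by
      intro k
      by_cases hky : φ k y = 0
      · rw [hzero k hky]
        refine ⟨fun h0 => ?_, fun h0 => ?_, fun h0 => ?_⟩
        · simp [h0, hux k h0]
        · exact mul_nonneg hε.le ((hL k hky).1 h0)
        · exact mul_nonpos_of_nonneg_of_nonpos hε.le ((hL k hky).2 h0)
      · refine ⟨fun h0 => absurd ((h k).1 h0) hky, fun h0 => ?_, fun h0 => ?_⟩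
        · exact ((hs k).1 (lt_of_le_of_ne ((h k).2.1 h0) (Ne.symm hky))).le
        · exact ((hs k).2 (lt_of_le_of_ne ((h k).2.2 h0) hky)).le
    have hτz : φ τ (y + ε • (x - t • u)) ≠ 0 := by
      rw [hzero τ hτy]
      simp [hτu, hτx, hε.ne']
    have hkz : φ k (y + ε • (x - t • u)) = 0 := by
      rw [hzero k hkL, hk, mul_zero]
    have hne' : sg φ (y + ε • (x - t • u)) ≠ sg φ x := by
      intro heq
      rw [sg_eq_iff] at heq
      exact hkx ((heq k).1.1 hkz)
    have h1 := hyz.supp_lt hτy hτz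
    have h2 := hzx.supp_lt hkz hkx
    obtain ⟨z, hz1, hz2⟩ := ih _ (by omega) _ hzx hne' rfl
    exact ⟨z, hyz.trans hz1, hz2⟩

/-- Every face lies in the closure of a full-dimensional one (null functionals being ignored). -/
lemma exists_top (x : V) : ∃ T, Below φ x T ∧ Flat φ T = ⊤ := by
  obtain ⟨T, hT, hmax⟩ := Set.exists_max_image
    (Set.image (supp φ) {T | Below φ x T}) Finset.card (Set.toFinite _) ⟨_, x, Below.refl x, rfl⟩
  obtain ⟨T, hxT, rfl⟩ := hT
  refine ⟨T, hxT, ?_⟩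
  rw [eq_top_iff]
  intro v _ k hk
  by_contra hv
  obtain ⟨ε, hε, hs⟩ := exists_small (φ := φ) T v
  have hb : Below φ T (T + ε • v) := by
    intro k
    refine ⟨fun h0 => ?_, fun h0 => ?_, fun h0 => ?_⟩
    · rcases lt_trichotomy (φ k T) 0 with h1 | h1 | h1
      · linarith [(hs k).2 h1]
      · exact h1
      · linarith [(hs k).1 h1]
    · by_contra! h1
      linarith [(hs k).2 h1]
    · by_contra! h1
      linarith [(hs k).1 h1]
  have := hb.supp_lt hk (by simp [hk, hε.ne', hv])
  have h2 := hmax _ ⟨_, hxT.trans hb, rfl⟩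
  omega

end Arrangement

/-! ### Flags of faces and the pulling triangulation -/

section Flags
variable {V κ : Type} [AddCommGroup V] [Module ℝ V] [Fintype κ] (φ : κ → V →ₗ[ℝ] ℝ)

/-- `FaceFlag φ P p x L S`: a saturated flag of faces from the face of `p` up to the face of `x`.
`S` lists the sign vectors of the faces, from the top down. `L` lists a label for each step `y < x`:
a functional `τ` that vanishes on the lower face but not on the upper one, with its sign on the
upper one. The label satisfies the predicate `P` whenever such a functional satisfying `P` exists. -/
inductive FaceFlag (P : κ → Prop) (p : V) : V → List (κ × SignType) → List (κ → SignType) → Prop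
  | base : FaceFlag P p p [] [sg φ p]
  | step {x y : V} {τ : κ} {L : List (κ × SignType)} {S : List (κ → SignType)}
      (hy : FaceFlag P p y L S) (hyx : Below φ y x) (hτy : φ τ y = 0) (hτx : φ τ x ≠ 0)
      (hcov : ∀ w ∈ Flat φ x, φ τ w = 0 → w ∈ Flat φ y)
      (hP : P τ ∨ ∀ k, P k → φ k y = 0 → φ k x = 0) :
      FaceFlag P p x ((τ, SignType.sign (φ τ x)) :: L) (sg φ x :: S)

variable {φ} {P : κ → Prop}

lemma FaceFlag.vertex_below {p x : V} {L S} (h : FaceFlag φ P p x L S) : Below φ p x := by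
  induction h with
  | base => exact Below.refl p
  | step _ hyx _ _ _ _ ih => exact ih.trans hyx

lemma FaceFlag.length_eq {p x : V} {L S} (h : FaceFlag φ P p x L S) : S.length = L.length + 1 := by
  induction h with
  | base => rfl
  | step _ _ _ _ _ _ ih => simp [ih]

lemma FaceFlag.ne_zero {p x : V} {L S} (h : FaceFlag φ P p x L S) : ∀ a ∈ L, φ a.1 x ≠ 0 := by
  induction h with
  | base => simp
  | step _ hyx _ hτx _ _ ih =>
    intro a ha
    rcases List.mem_cons.1 ha with rfl | ha
    · exact hτx
    · exact fun h0 => ih a ha ((hyx a.1).1 h0)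

lemma FaceFlag.nodup {p x : V} {L S} (h : FaceFlag φ P p x L S) : (L.map Prod.fst).Nodup := by
  induction h with
  | base => simp
  | step hy _ hτy _ _ _ ih =>
    rw [List.map_cons, List.nodup_cons]
    refine ⟨fun hm => ?_, ih⟩
    obtain ⟨a, ha, hat⟩ := List.mem_map.1 hm
    exact hy.ne_zero a ha (by rw [hat]; exact hτy)

lemma FaceFlag.eq_zero {p x : V} {L S} (h : FaceFlag φ P p x L S) : ∀ a ∈ L, φ a.1 p = 0 := by
  induction h with
  | base => simp
  | step hy hyx hτy hτx _ _ ih =>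
    intro a ha
    rcases List.mem_cons.1 ha with rfl | ha
    · exact (hy.vertex_below _).1 hτy
    · exact ih a ha

lemma FaceFlag.mem_Flat {p x : V} {L S} (h : FaceFlag φ P p x L S) :
    ∀ w ∈ Flat φ x, (∀ a ∈ L, φ a.1 w = 0) → w ∈ Flat φ p := by
  induction h with
  | base => exact fun w hw _ => hw
  | step _ _ _ _ hcov _ ih =>
    intro w hw ha
    exact ih w (hcov w hw (ha _ List.mem_cons_self)) fun a h => ha a (List.mem_cons_of_mem _ h)

/-- If no label satisfies `P`, the functionals satisfying `P` that vanish at the vertex vanish on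
all faces of the flag. -/
lemma FaceFlag.preferred {p x : V} {L S} (h : FaceFlag φ P p x L S) (hL : ∀ a ∈ L, ¬ P a.1) :
    ∀ k, P k → φ k p = 0 → φ k x = 0 := by
  induction h with
  | base => exact fun k _ h => h
  | step _ _ _ _ _ hP ih =>
    intro k hk h0
    refine (hP.resolve_left (hL _ List.mem_cons_self)) k hk
      (ih (fun a h => hL a (List.mem_cons_of_mem _ h)) k hk h0)

lemma Below.Flat_le {y x : V} (h : Below φ y x) : Flat φ y ≤ Flat φ x :=
  fun _ hw k hk => hw k ((h k).1 hk)

/-- Each step of a flag raises the dimension by one. -/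
lemma FaceFlag.finrank_eq [FiniteDimensional ℝ V] {p x : V} {L S} (h : FaceFlag φ P p x L S) :
    Module.finrank ℝ (Flat φ x) = L.length + Module.finrank ℝ (Flat φ p) := by
  induction h with
  | base => simp
  | @step x y τ L S _ hyx hτy hτx hcov _ ih =>
    have hne : (φ τ).domRestrict (Flat φ x) ≠ 0 := by
      intro h0
      have := LinearMap.congr_fun h0 ⟨x, self_mem_Flat x⟩
      exact hτx this
    have h1 := Module.Dual.finrank_ker_add_one_of_ne_zero (f := (φ τ).domRestrict (Flat φ x)) hne
    have h2 : (LinearMap.ker ((φ τ).domRestrict (Flat φ x))).map (Flat φ x).subtype = Flat φ y := by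
      ext w
      simp only [Submodule.mem_map, LinearMap.mem_ker, LinearMap.domRestrict_apply,
        Submodule.subtype_apply, Subtype.exists, exists_and_right, exists_eq_right]
      exact ⟨fun ⟨hw, h0⟩ => hcov w hw h0, fun hw => ⟨hyx.Flat_le hw, hw τ hτy⟩⟩
    have h3 := Submodule.finrank_map_subtype_eq (Flat φ x)
      (LinearMap.ker ((φ τ).domRestrict (Flat φ x)))
    rw [h2] at h3
    rw [← h1, ← h3, ih, List.length_cons]
    ring

lemma IsVertex.finrank_Flat {p : V} (hp : IsVertex φ p) : Module.finrank ℝ (Flat φ p) = 1 := by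
  have : Flat φ p = ℝ ∙ p := by
    ext w
    rw [Submodule.mem_span_singleton]
    constructor
    · intro hw
      obtain ⟨c, hc⟩ := hp.exists_smul_of_mem_Flat hw
      exact ⟨c, hc.symm⟩
    · rintro ⟨c, rfl⟩
      exact (Flat φ p).smul_mem c (self_mem_Flat p)
  rw [this, finrank_span_singleton hp.1]

/-- A flag is determined by its labels, the flat of its top face and the side of its vertex. -/
lemma FaceFlag.unique {ψ : V →ₗ[ℝ] ℝ} {p p' : V} (hp : IsVertex φ p)
    (hψ : 0 < ψ p) (hψ' : 0 < ψ p') {x : V} {L S} (h : FaceFlag φ P p x L S) :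
    ∀ {x' : V} {S'}, FaceFlag φ P p' x' L S' → Flat φ x = Flat φ x' → S = S' ∧ sg φ x = sg φ x' := by
  induction h with
  | base =>
    intro x' S' h' hF
    cases h'
    have : p' ∈ Flat φ p := hF ▸ self_mem_Flat p'
    obtain ⟨c, hc⟩ := hp.exists_smul_of_mem_Flat this
    have hc0 : 0 < c := by
      rw [hc, map_smul, smul_eq_mul] at hψ'
      exact pos_of_mul_pos_left hψ' hψ.le
    have : sg φ p = sg φ p' := by
      rw [sg_eq_iff]
      intro k
      simp [hc, hc0.ne', mul_pos_iff_of_pos_left hc0, mul_neg_iff, hc0, hc0.not_gt]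
    exact ⟨by rw [this], this⟩
  | @step x y τ L S hy hyx hτy hτx hcov _ ih =>
    intro x' S' h' hF
    generalize hlab : (τ, SignType.sign (φ τ x)) :: L = lab at h'
    cases h' with
    | base => simp at hlab
    | @step _ y' τ' L' S2 hy' hyx' hτy' hτx' hcov' _ =>
      simp only [List.cons.injEq, Prod.mk.injEq] at hlab
      obtain ⟨⟨rfl, hsgn⟩, rfl⟩ := hlab
      have hFy : Flat φ y = Flat φ y' := by
        ext w
        exact ⟨fun hw => hcov' w (hF ▸ hyx.Flat_le hw) (hw τ hτy),
          fun hw => hcov w (hF ▸ hyx'.Flat_le hw) (hw τ hτy')⟩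
      obtain ⟨rfl, hsy⟩ := ih hy' hFy
      -- Functionals vanishing on the lower flat are, on the upper flat, multiples of `φ τ`, so the
      -- sign of `φ τ` recorded in the label determines their signs.
      have hsx : sg φ x = sg φ x' := by
        funext k
        by_cases hk : φ k y = 0
        · have hw : φ τ x' • x - φ τ x • x' ∈ Flat φ x :=
            (Flat φ x).sub_mem ((Flat φ x).smul_mem _ (self_mem_Flat x))
              ((Flat φ x).smul_mem _ (hF ▸ self_mem_Flat x'))
          have h1 := hcov _ hw (by simp [mul_comm]) k hk
          simp only [map_sub, map_smul, smul_eq_mul, sub_eq_zero] at h1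
          have h2 := congrArg SignType.sign h1
          rw [sign_mul, sign_mul, ← hsgn] at h2
          have h3 : SignType.sign (φ τ x) ≠ 0 := by simpa using hτx
          exact mul_left_cancel₀ h3 h2
        · have hk' : φ k y' ≠ 0 := by
            rw [sg_eq_iff] at hsy
            exact mt (hsy k).1.2 hk
          have e : ∀ {a b : V}, Below φ a b → φ k a ≠ 0 →
              SignType.sign (φ k b) = SignType.sign (φ k a) := by
            intro a b hab ha
            rcases lt_or_gt_of_ne ha with h | h
            · rw [sign_neg h, sign_neg (hab.neg h)]
            · rw [sign_pos h, sign_pos (hab.pos h)]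
          exact (e hyx hk).trans ((congrFun hsy k).trans (e hyx' hk').symm)
      exact ⟨by rw [hsx], hsx⟩

/-- A flag ending at a proper face `y` of `x` extends to a flag ending at `x`, by inserting facets
between them. -/
lemma FaceFlag.extend {p : V} : ∀ {x y : V} {L S}, FaceFlag φ P p y L S → Below φ y x →
    sg φ y ≠ sg φ x → ∃ L' S', FaceFlag φ P p x L' (sg φ x :: S') ∧ S.Sublist S' := by
  suffices ∀ n, ∀ {x y : V} {L S}, FaceFlag φ P p y L S → Below φ y x →
    sg φ y ≠ sg φ x → (supp φ x).card = n →
    ∃ L' S', FaceFlag φ P p x L' (sg φ x :: S') ∧ S.Sublist S' from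
    by intro x y L S h h1 h2; exact this _ h h1 h2 rfl
  intro n
  induction n using Nat.strong_induction_on with
  | _ n ih =>
    intro x y L S hy hyx hne hn
    obtain ⟨z, hyz, hzx, hzne, hcov⟩ := exists_cover hyx hne
    have key : ∀ {z : V} {L S}, FaceFlag φ P p z L S → Below φ z x → sg φ z ≠ sg φ x →
        (∀ τ, φ τ z = 0 → φ τ x ≠ 0 → ∀ w ∈ Flat φ x, φ τ w = 0 → w ∈ Flat φ z) →
        ∃ L', FaceFlag φ P p x L' (sg φ x :: S) := by
      intro z L S hz hzx hzne hcov
      by_cases hpr : ∃ k, P k ∧ φ k z = 0 ∧ φ k x ≠ 0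
      · obtain ⟨k, hk, hkz, hkx⟩ := hpr
        exact ⟨_, FaceFlag.step hz hzx hkz hkx (hcov k hkz hkx) (Or.inl hk)⟩
      · push Not at hpr
        obtain ⟨k, hkz, hkx⟩ := hzx.exists_of_ne hzne
        exact ⟨_, FaceFlag.step hz hzx hkz hkx (hcov k hkz hkx) (Or.inr hpr)⟩
    by_cases hs : sg φ y = sg φ z
    · obtain ⟨L', h⟩ := key hy hyx hne (by
        intro τ h1 h2 w hw h3
        rw [sg_eq_iff] at hs
        intro k hk
        exact hcov τ ((hs τ).1.1 h1) h2 w hw h3 k ((hs k).1.1 hk))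
      exact ⟨L', S, h, List.Sublist.refl _⟩
    · obtain ⟨k, hkz, hkx⟩ := hzx.exists_of_ne hzne
      obtain ⟨L1, S1, h1, h2⟩ := ih _ (hn ▸ hzx.supp_lt hkz hkx) hy hyz hs rfl
      obtain ⟨L', h⟩ := key h1 hzx hzne hcov
      exact ⟨L', _, h, h2.trans (List.sublist_cons_self _ _)⟩

end Flags

section Codes
variable {V κ : Type} [AddCommGroup V] [Module ℝ V] [Fintype κ] (φ : κ → V →ₗ[ℝ] ℝ)

/-- A vertex, chosen once and for all, of the closure of the face with sign vector `σ`; the junk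
value `0` is used when there is none. -/
noncomputable def apex (σ : κ → SignType) : V :=
  if h : ∃ p, IsVertex φ p ∧ ∃ x, sg φ x = σ ∧ Below φ p x then h.choose else 0

/-- `Code φ x L`: shooting from `x` away from the apex of its face hits the boundary of the face
in a point `y`; repeat from `y` until `0` is reached. `L` lists the sign vectors of the faces met.
The sets of points with the same code are the cells of the pulling triangulation of the
arrangement. -/
inductive Code : V → List (κ → SignType) → Prop
  | nil : Code 0 []
  | cons {x y : V} {t : ℝ} {L : List (κ → SignType)} (hy : Code y L) (ht : 0 < t)
      (hx : x = y + t • apex φ (sg φ x)) (hyx : Below φ y x) (hk : ∃ k, φ k y = 0 ∧ φ k x ≠ 0) :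
      Code x (sg φ x :: L)

variable {φ}

lemma apex_spec (hess : ∀ w, (∀ k, φ k w = 0) → w = 0) {x : V} (hx : x ≠ 0) :
    IsVertex φ (apex φ (sg φ x)) ∧ Below φ (apex φ (sg φ x)) x := by
  have h : ∃ p, IsVertex φ p ∧ ∃ y, sg φ y = sg φ x ∧ Below φ p y := by
    obtain ⟨p, hp, hpx⟩ := exists_vertex hess x hx
    exact ⟨p, hp, x, rfl, hpx⟩
  rw [apex, dif_pos h]
  obtain ⟨h1, y, hy, h2⟩ := h.choose_spec
  exact ⟨h1, h2.trans (Below.of_sg_eq hy)⟩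

lemma Code.exists (hess : ∀ w, (∀ k, φ k w = 0) → w = 0) : ∀ x : V, ∃ L, Code φ x L := by
  suffices ∀ n, ∀ x : V, (supp φ x).card = n → ∃ L, Code φ x L from fun x => this _ x rfl
  intro n
  induction n using Nat.strong_induction_on with
  | _ n ih =>
    intro x hn
    by_cases hx : x = 0
    · exact ⟨[], hx ▸ Code.nil⟩
    obtain ⟨hp, hpx⟩ := apex_spec hess hx
    obtain ⟨t, ht, hb, k, hk, hkx⟩ := exists_shoot_below hpx (by
      by_contra! hc
      exact hp.1 (hess _ hc))
    obtain ⟨L, hL⟩ := ih _ (hn ▸ hb.supp_lt hk hkx) _ rfl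
    exact ⟨_, Code.cons hL ht (by abel) hb ⟨k, hk, hkx⟩⟩

/-- The point where the shooting stops is determined by `x`, hence so is the code. -/
lemma Code.unique {x : V} {L} (h : Code φ x L) : ∀ {L'}, Code φ x L' → L = L' := by
  induction h with
  | nil =>
    intro L' h'
    cases h' with
    | nil => rfl
    | cons _ _ _ _ hk => simp at hk
  | @cons x y t L hy ht hx hyx hk ih =>
    intro L' h'
    cases h' with
    | nil => simp at hk
    | @cons _ y' t' L' hy' ht' hx' hyx' hk' =>
      have aux : ∀ {y y' : V} {t t' : ℝ}, x = y + t • apex φ (sg φ x) →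
          x = y' + t' • apex φ (sg φ x) → 0 < t → Below φ y' x → (∃ k, φ k y = 0 ∧ φ k x ≠ 0) →
          t' ≤ t := by
        intro y y' t t' hx hx' ht hyx' ⟨k, hk, hkx⟩
        have e : φ k x = φ k y + t * φ k (apex φ (sg φ x)) := by
          conv_lhs => rw [hx]
          simp
        have e' : φ k x = φ k y' + t' * φ k (apex φ (sg φ x)) := by
          conv_lhs => rw [hx']
          simp
        by_contra! hlt
        rcases lt_or_gt_of_ne hkx with h | h
        · have := (hyx' k).2.2 h
          nlinarith
        · have := (hyx' k).2.1 h
          nlinarith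
      have htt : t = t' := le_antisymm (aux hx' hx ht' hyx hk') (aux hx hx' ht hyx' hk)
      have hyy : y = y' := by
        have := hx.symm.trans hx'
        rw [htt] at this
        exact add_right_cancel this
      subst hyy
      rw [ih hy']

lemma Code.sg_eq {x y : V} {L} (hx : Code φ x L) (hy : Code φ y L) : sg φ x = sg φ y := by
  cases hx with
  | nil => cases hy; rfl
  | cons =>
    generalize hL : sg φ x :: _ = L' at hy
    cases hy with
    | nil => simp at hL
    | cons => exact (List.cons.inj hL).1

/-- The points with code `σ :: L` form the open join of the apex of `σ` with the set of points
with code `L`. -/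
lemma Code.cons_iff (hess : ∀ w, (∀ k, φ k w = 0) → w = 0) {x0 y0 : V} {t0 : ℝ} {L}
    (hy0 : Code φ y0 L) (ht0 : 0 < t0)
    (hx0 : x0 = y0 + t0 • apex φ (sg φ x0)) (hyx0 : Below φ y0 x0)
    (hk0 : ∃ k, φ k y0 = 0 ∧ φ k x0 ≠ 0) (x : V) :
    Code φ x (sg φ x0 :: L) ↔ ∃ (y : V) (t : ℝ), Code φ y L ∧ 0 < t ∧ x = y + t • apex φ (sg φ x0) := by
  constructor
  · intro h
    generalize hL : sg φ x0 :: L = L' at h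
    cases h with
    | nil => simp at hL
    | cons hy ht hx hyx hk =>
      obtain ⟨h1, h2⟩ := List.cons.inj hL
      subst h2
      exact ⟨_, _, hy, ht, h1 ▸ hx⟩
  · rintro ⟨y, t, hy, ht, hx⟩
    have hx0ne : x0 ≠ 0 := by
      rintro rfl
      obtain ⟨k, _, hk⟩ := hk0
      simp at hk
    obtain ⟨hp, hpx⟩ := apex_spec hess hx0ne
    have hsy : sg φ y = sg φ y0 := hy.sg_eq hy0
    rw [sg_eq_iff] at hsy
    set p := apex φ (sg φ x0) with hpdef
    have hv : ∀ k, φ k x = φ k y + t * φ k p := fun k => by rw [hx]; simp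
    have hv0 : ∀ k, φ k x0 = φ k y0 + t0 * φ k p := fun k => by conv_lhs => rw [hx0]; simp
    have hs : sg φ x = sg φ x0 := by
      rw [sg_eq_iff]
      intro k
      obtain ⟨a1, a2, a3⟩ := hyx0 k
      obtain ⟨b1, b2, b3⟩ := hpx k
      obtain ⟨c1, c2, c3⟩ := hsy k
      have e := hv k
      have e0 := hv0 k
      rcases lt_trichotomy (φ k x0) 0 with h | h | h
      · have ha := a3 h
        have hb := b3 h
        have hlt : φ k x < 0 := by
          rcases ha.lt_or_eq with h1 | h1
          · have := c3.2 h1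
            nlinarith
          · have h2 := c1.2 h1
            have : φ k p < 0 := by
              by_contra! h3
              nlinarith
            nlinarith
        exact ⟨⟨fun h' => by linarith, fun h' => by linarith⟩,
          ⟨fun h' => by linarith, fun h' => by linarith⟩, ⟨fun _ => h, fun _ => hlt⟩⟩
      · have : φ k x = 0 := by rw [e, c1.2 (a1 h), b1 h]; simp
        simp [this, h]
      · have ha := a2 h
        have hb := b2 h
        have hlt : 0 < φ k x := by
          rcases ha.lt_or_eq with h1 | h1
          · have := c2.2 h1
            nlinarith
          · have h2 := c1.2 h1.symm
            have : 0 < φ k p := by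
              by_contra! h3
              nlinarith
            nlinarith
        exact ⟨⟨fun h' => by linarith, fun h' => by linarith⟩,
          ⟨fun _ => h, fun _ => hlt⟩, ⟨fun h' => by linarith, fun h' => by linarith⟩⟩
    rw [← hs]
    refine Code.cons hy ht (by rw [hs]; exact hx) ?_ ?_
    · exact ((Below.of_sg_eq (sg_eq_iff.2 hsy)).trans hyx0).trans (Below.of_sg_eq hs.symm)
    · obtain ⟨k, h1, h2⟩ := hk0
      rw [sg_eq_iff] at hs
      exact ⟨k, (hsy k).1.2 h1, mt (hs k).1.1 h2⟩

/-- The faces listed in a code form a chain, so they belong to a saturated flag. -/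
lemma Code.exists_flag (hess : ∀ w, (∀ k, φ k w = 0) → w = 0) (P : κ → Prop) {x : V} {L}
    (h : Code φ x L) : x ≠ 0 → ∃ p x' L' S, IsVertex φ p ∧ sg φ x' = sg φ x ∧
      FaceFlag φ P p x' L' S ∧ L.Sublist S := by
  induction h with
  | nil => simp
  | @cons x y t L hy ht hx hyx hk ih =>
    intro hx0
    obtain ⟨hp, hpx⟩ := apex_spec hess hx0
    by_cases hy0 : y = 0
    · subst hy0
      have hL : L = [] := hy.unique Code.nil
      have hs : sg φ (apex φ (sg φ x)) = sg φ x := by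
        refine hpx.antisymm fun k hk => ?_
        conv_lhs => rw [hx]
        simp [hk]
      refine ⟨_, _, [], _, hp, hs, FaceFlag.base, ?_⟩
      rw [hL, hs]
    · obtain ⟨p, y', L1, S1, hp1, hs, hF, hsub⟩ := ih hy0
      obtain ⟨k, h1, h2⟩ := hk
      obtain ⟨L2, S2, hF2, hsub2⟩ := hF.extend ((Below.of_sg_eq hs).trans hyx) (by
        intro he
        rw [hs, sg_eq_iff] at he
        exact h2 ((he k).1.1 h1))
      exact ⟨p, x, L2, _, hp1, rfl, hF2, (hsub.trans hsub2).cons_cons _⟩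

/-- The faces listed in a code belong to a flag that goes up to a full-dimensional face. -/
lemma Code.exists_full_flag (hess : ∀ w, (∀ k, φ k w = 0) → w = 0) (P : κ → Prop) {x : V} {L}
    (h : Code φ x L) (hx : x ≠ 0) : ∃ p T L' S, IsVertex φ p ∧ Below φ p x ∧ Below φ x T ∧
      Flat φ T = ⊤ ∧ FaceFlag φ P p T L' S ∧ L.Sublist S := by
  obtain ⟨p, x', L', S, hp, hs, hF, hsub⟩ := h.exists_flag hess P hx
  obtain ⟨T, hxT, hT⟩ := exists_top (φ := φ) x'
  have hpx : Below φ p x := hF.vertex_below.trans (Below.of_sg_eq hs)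
  have hxT' : Below φ x T := (Below.of_sg_eq hs.symm).trans hxT
  by_cases he : sg φ x' = sg φ T
  · refine ⟨p, x', L', S, hp, hpx, Below.of_sg_eq hs.symm, ?_, hF, hsub⟩
    rw [← hT]
    ext w
    rw [sg_eq_iff] at he
    exact forall_congr' fun k => by rw [(he k).1]
  · obtain ⟨L2, S2, hF2, hsub2⟩ := hF.extend hxT he
    exact ⟨p, T, L2, _, hp, hpx, hxT', hT, hF2,
      (hsub.trans hsub2).trans (List.sublist_cons_self _ _)⟩

/-- Every face lies at the bottom of a flag that goes up to a full-dimensional face. -/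
lemma exists_full_flag (φ : κ → V →ₗ[ℝ] ℝ) (P : κ → Prop) (p : V) :
    ∃ T L S, Flat φ T = ⊤ ∧ FaceFlag φ P p T L S := by
  obtain ⟨T, hxT, hT⟩ := exists_top (φ := φ) p
  by_cases he : sg φ p = sg φ T
  · refine ⟨p, [], _, ?_, FaceFlag.base⟩
    rw [← hT]
    ext w
    rw [sg_eq_iff] at he
    exact forall_congr' fun k => by rw [(he k).1]
  · obtain ⟨L2, S2, hF2, hsub2⟩ := (FaceFlag.base (P := P)).extend hxT he
    exact ⟨T, L2, _, hT, hF2⟩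

end Codes

/-! ### Simplicial cones -/

section Cones
variable {V : Type} [AddCommGroup V] [Module ℝ V]

/-- The relatively open cone cut out by `β i > 0` for `i ∈ I` and `β i = 0` for `i ∉ I`. -/
def coneOf {d : ℕ} (β : Fin (d + 1) → V →ₗ[ℝ] ℝ) (I : Set (Fin (d + 1))) : Set V :=
  {x | ∀ i, (i ∈ I → 0 < β i x) ∧ (i ∉ I → β i x = 0)}

/-- A relatively open simplicial cone: when `V` has dimension `d + 1`, the functionals `β` are the
coordinates of a basis and the cone is spanned by the basis vectors indexed by `I`. -/
def IsCone (d : ℕ) (Δ : Set V) : Prop :=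
  ∃ (β : Fin (d + 1) → V →ₗ[ℝ] ℝ) (I : Set (Fin (d + 1))),
    (∀ w, (∀ i, β i w = 0) → w = 0) ∧ Δ = coneOf β I

lemma IsCone.smul_mem {d : ℕ} {Δ : Set V} (h : IsCone d Δ) {x : V} (hx : x ∈ Δ) {c : ℝ}
    (hc : 0 < c) : c • x ∈ Δ := by
  obtain ⟨β, I, -, rfl⟩ := h
  intro i
  refine ⟨fun hi => ?_, fun hi => ?_⟩
  · have := (hx i).1 hi
    simp only [map_smul, smul_eq_mul]
    positivity
  · simp [(hx i).2 hi]

lemma IsCone.add_mem {d : ℕ} {Δ : Set V} (h : IsCone d Δ) {x y : V} (hx : x ∈ Δ) (hy : y ∈ Δ) :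
    x + y ∈ Δ := by
  obtain ⟨β, I, -, rfl⟩ := h
  intro i
  refine ⟨fun hi => ?_, fun hi => ?_⟩
  · have h1 := (hx i).1 hi
    have h2 := (hy i).1 hi
    simp only [map_add]
    positivity
  · simp [(hx i).2 hi, (hy i).2 hi]

lemma IsCone.zero {d : ℕ} {Δ : Set V} (h : IsCone d Δ) : IsCone d ({0} : Set V) := by
  obtain ⟨β, I, hβ, rfl⟩ := h
  refine ⟨β, ∅, hβ, ?_⟩
  ext x
  simp only [Set.mem_singleton_iff, coneOf, Set.mem_empty_iff_false, IsEmpty.forall_iff, true_and,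
    not_false_eq_true, forall_true_left, Set.mem_ofPred_eq]
  exact ⟨fun h i => by simp [h], hβ x⟩

/-- The open join of a simplicial cone with a point outside its linear span is a simplicial
cone. The new coordinate `j` is one that vanishes on the cone but not at `p`. -/
lemma IsCone.join {d : ℕ} {Δ : Set V} (h : IsCone d Δ) (hne : Δ.Nonempty) {p : V}
    {φ : V →ₗ[ℝ] ℝ} (hφ : ∀ y ∈ Δ, φ y = 0) (hp : φ p ≠ 0) :
    IsCone d {x | ∃ (y : V) (t : ℝ), y ∈ Δ ∧ 0 < t ∧ x = y + t • p} := by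
  obtain ⟨β, I, hβ, rfl⟩ := h
  obtain ⟨y0, hy0⟩ := hne
  obtain ⟨j, hjI, hj⟩ : ∃ j, j ∉ I ∧ β j p ≠ 0 := by
    by_contra! hc
    obtain ⟨ε, hε, h⟩ := exists_small (φ := β) y0 p
    have : y0 + ε • p ∈ coneOf β I := fun i =>
      ⟨fun hi => (h i).1 ((hy0 i).1 hi), fun hi => by simp [hc i hi, (hy0 i).2 hi]⟩
    have h1 := hφ _ this
    rw [map_add, hφ _ hy0, map_smul, smul_eq_mul, zero_add] at h1
    exact (mul_ne_zero hε.ne' hp) h1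
  refine ⟨fun i => if i = j then (β j p)⁻¹ • β j else β i - (β i p / β j p) • β j,
    insert j I, ?_, ?_⟩
  · intro w hw
    have hwj : β j w = 0 := by
      have := hw j
      simpa [hj] using this
    refine hβ w fun i => ?_
    by_cases hi : i = j
    · rw [hi, hwj]
    · simpa [hi, hwj] using hw i
  · ext x
    constructor
    · rintro ⟨y, t, hy, ht, rfl⟩ i
      have hyj := (hy j).2 hjI
      by_cases hi : i = j
      · subst hi
        simp [hyj]
        field_simp
        exact ht
      · simp only [hi, if_false, Set.mem_insert_iff, false_or, LinearMap.sub_apply, map_add,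
          map_smul, LinearMap.smul_apply, smul_eq_mul, hyj]
        rw [div_mul_cancel₀ _ hj, mul_zero, sub_zero, sub_self, mul_zero, add_zero]
        exact hy i
    · intro hx
      have hxj := (hx j).1 (Set.mem_insert _ _)
      simp only [if_true, LinearMap.smul_apply, smul_eq_mul] at hxj
      refine ⟨x - ((β j p)⁻¹ * β j x) • p, (β j p)⁻¹ * β j x, ?_, hxj, by abel⟩
      intro i
      by_cases hi : i = j
      · subst hi
        refine ⟨fun h => absurd h hjI, fun _ => ?_⟩
        simp only [map_sub, map_smul, smul_eq_mul]
        field_simp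
        ring
      · have := hx i
        simp only [hi, if_false, Set.mem_insert_iff, false_or, LinearMap.sub_apply,
          LinearMap.smul_apply, smul_eq_mul] at this
        simp only [map_sub, map_smul, smul_eq_mul]
        have e : β i x - β i p / β j p * β j x = β i x - (β j p)⁻¹ * β j x * β i p := by
          field_simp
        rwa [← e]

variable {κ : Type} [Fintype κ] {φ : κ → V →ₗ[ℝ] ℝ}

/-- The cells of the pulling triangulation are simplicial cones. -/
lemma Code.isCone {d : ℕ} (h0 : IsCone d ({0} : Set V)) (hess : ∀ w, (∀ k, φ k w = 0) → w = 0)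
    {x : V} {L} (h : Code φ x L) : IsCone d {z | Code φ z L} := by
  induction h with
  | nil =>
    convert h0 using 1
    ext z
    simp only [Set.mem_ofPred_eq, Set.mem_singleton_iff]
    constructor
    · intro h; cases h; rfl
    · rintro rfl; exact Code.nil
  | @cons x y t L hy ht hx hyx hk ih =>
    have e : {z | Code φ z (sg φ x :: L)} =
        {z | ∃ (y : V) (t : ℝ), y ∈ {z | Code φ z L} ∧ 0 < t ∧ z = y + t • apex φ (sg φ x)} := by
      ext z
      exact Code.cons_iff hess hy ht hx hyx hk z
    rw [e]
    obtain ⟨k, h1, h2⟩ := hk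
    refine ih.join ⟨y, hy⟩ (φ := φ k) ?_ ?_
    · intro z hz
      exact ((sg_eq_iff.1 (Code.sg_eq hz hy)) k).1.2 h1
    · intro hp
      apply h2
      rw [hx]
      simp [h1, hp]

/-- The apices of the faces in the code of `x` are vertices of the closed face of `x`. -/
lemma Code.apex_spec (hess : ∀ w, (∀ k, φ k w = 0) → w = 0) {x : V} {L} (h : Code φ x L) :
    ∀ σ ∈ L, IsVertex φ (apex φ σ) ∧ Below φ (apex φ σ) x := by
  induction h with
  | nil => simp
  | @cons x y t L hy ht hx hyx hk ih =>
    intro σ hσ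
    rcases List.mem_cons.1 hσ with rfl | hσ
    · refine _root_.apex_spec hess ?_
      rintro rfl
      simp at hk
    · exact ⟨(ih σ hσ).1, (ih σ hσ).2.trans hyx⟩

/-- A point is a combination, with positive coefficients, of the apices in its code; so a
functional that is nonnegative at these apices is nonnegative at the point. -/
lemma Code.nonneg (h : V →ₗ[ℝ] ℝ) {x : V} {L} (hx : Code φ x L)
    (hL : ∀ σ ∈ L, 0 ≤ h (apex φ σ)) : 0 ≤ h x ∧ (h x = 0 → ∀ σ ∈ L, h (apex φ σ) = 0) := by
  induction hx with
  | nil => simp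
  | @cons x y t L hy ht hx hyx hk ih =>
    obtain ⟨h1, h2⟩ := ih fun σ hσ => hL σ (List.mem_cons_of_mem _ hσ)
    have h3 := hL _ List.mem_cons_self
    have e : h x = h y + t * h (apex φ (sg φ x)) := by
      conv_lhs => rw [hx]
      simp
    have h4 := mul_nonneg ht.le h3
    refine ⟨by linarith, fun h0 σ hσ => ?_⟩
    rcases List.mem_cons.1 hσ with rfl | hσ
    · have : t * h (apex φ (sg φ x)) = 0 := by linarith
      exact (mul_eq_zero.1 this).resolve_left ht.ne'
    · exact h2 (by linarith) σ hσ

lemma Code.eq_zero (h : V →ₗ[ℝ] ℝ) {x : V} {L} (hx : Code φ x L)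
    (hL : ∀ σ ∈ L, h (apex φ σ) = 0) : h x = 0 := by
  induction hx with
  | nil => simp
  | @cons x y t L hy ht hx hyx hk ih =>
    have h1 := ih fun σ hσ => hL σ (List.mem_cons_of_mem _ hσ)
    have h3 := hL _ List.mem_cons_self
    rw [hx, map_add, map_smul, h1, h3]
    simp

/-- `h` vanishes somewhere, but not everywhere, on `Δ`. -/
def Cuts (h : V →ₗ[ℝ] ℝ) (Δ : Set V) : Prop := (∃ x ∈ Δ, h x = 0) ∧ ∃ y ∈ Δ, h y ≠ 0

lemma Cuts.mono {h : V →ₗ[ℝ] ℝ} {Δ Δ' : Set V} (hc : Cuts h Δ) (hs : Δ ⊆ Δ') : Cuts h Δ' := by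
  obtain ⟨⟨x, hx, h1⟩, y, hy, h2⟩ := hc
  exact ⟨⟨x, hs hx, h1⟩, y, hs hy, h2⟩

/-- A functional that cuts a cell strictly separates two of the vertices of the cell. -/
lemma Code.exists_pos_neg_of_cuts {h : V →ₗ[ℝ] ℝ} {L} (hc : Cuts h {z | Code φ z L}) :
    ∃ σ ∈ L, ∃ σ' ∈ L, 0 < h (apex φ σ) ∧ h (apex φ σ') < 0 := by
  obtain ⟨⟨x, hx, h1⟩, y, hy, h2⟩ := hc
  have key : ∀ h : V →ₗ[ℝ] ℝ, h x = 0 → h y ≠ 0 → ∃ σ ∈ L, h (apex φ σ) < 0 := by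
    intro h h1 h2
    by_contra! hcon
    exact h2 (Code.eq_zero h hy ((Code.nonneg h hx hcon).2 h1))
  obtain ⟨σ', hσ', hn⟩ := key h h1 h2
  obtain ⟨σ, hσ, hp⟩ := key (-h) (by simp [h1]) (by simp [h2])
  exact ⟨σ, hσ, σ', hσ', by simpa using hp, hn⟩

end Cones

/-! ### Triangulating a simplicial cone -/

section Triangulate
variable {V : Type} [AddCommGroup V] [Module ℝ V] [FiniteDimensional ℝ V] {d s : ℕ}

/-- The common kernel of `t` is a line spanned by a nonzero point of `Δ`. -/
def Good (t : Fin d → V →ₗ[ℝ] ℝ) (Δ : Set V) : Prop :=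
  ∃ p ∈ Δ, p ≠ 0 ∧ (∀ i, t i p = 0) ∧ ∀ w, (∀ i, t i w = 0) → ∃ c : ℝ, w = c • p

/-- A generator, on the positive side of `ψ`, of the common kernel of `t`; the junk value `0` is
used if this kernel is not a line, or is a line on which `ψ` vanishes. -/
noncomputable def pt (ψ : V →ₗ[ℝ] ℝ) (t : Fin d → V →ₗ[ℝ] ℝ) : V :=
  if h : ∃ p, 0 < ψ p ∧ (∀ i, t i p = 0) ∧ ∀ w, (∀ i, t i w = 0) → ∃ c : ℝ, w = c • p
    then h.choose else 0

/-- Up to a positive factor, `pt ψ t` is the only generator on the positive side of `ψ`. -/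
lemma pt_spec {ψ : V →ₗ[ℝ] ℝ} {t : Fin d → V →ₗ[ℝ] ℝ} {p : V} (hp : 0 < ψ p)
    (h0 : ∀ i, t i p = 0) (h1 : ∀ w, (∀ i, t i w = 0) → ∃ c : ℝ, w = c • p) :
    ∃ c : ℝ, 0 < c ∧ p = c • pt ψ t := by
  have h : ∃ p, 0 < ψ p ∧ (∀ i, t i p = 0) ∧ ∀ w, (∀ i, t i w = 0) → ∃ c : ℝ, w = c • p :=
    ⟨p, hp, h0, h1⟩
  rw [pt, dif_pos h]
  obtain ⟨a, b, c⟩ := h.choose_spec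
  obtain ⟨e, he⟩ := c p h0
  refine ⟨e, ?_, he⟩
  rw [he, map_smul, smul_eq_mul] at hp
  exact pos_of_mul_pos_left hp a.le

lemma functional_ne_zero (hV : Module.finrank ℝ V = d + 1) {β : Fin (d + 1) → V →ₗ[ℝ] ℝ}
    (hβ : ∀ w, (∀ i, β i w = 0) → w = 0) (j : Fin (d + 1)) : ∃ w, β j w ≠ 0 := by
  have hinj : Function.Injective (LinearMap.pi β) := by
    rw [← LinearMap.ker_eq_bot, LinearMap.ker_eq_bot']
    intro w hw
    exact hβ w fun i => congrFun hw i
  have hsur := (LinearMap.injective_iff_surjective_of_finrank_eq_finrank (by simp [hV])).1 hinj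
  obtain ⟨w, hw⟩ := hsur (Pi.single j 1)
  refine ⟨w, ?_⟩
  have := congrFun hw j
  simp at this
  simp [this]

variable {κ : Type} [Fintype κ] {φ : κ → V →ₗ[ℝ] ℝ} {P : κ → Prop}

lemma FaceFlag.length_labels (hV : Module.finrank ℝ V = d + 1) {p T : V} {L S}
    (h : FaceFlag φ P p T L S) (hp : IsVertex φ p) (hT : Flat φ T = ⊤) : L.length = d := by
  have := h.finrank_eq
  rw [hT, hp.finrank_Flat, finrank_top, hV] at this
  omega

lemma FaceFlag.exists_smul {p T : V} {L S}
    (h : FaceFlag φ P p T L S) (hp : IsVertex φ p) (hT : Flat φ T = ⊤) {w : V}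
    (hw : ∀ a ∈ L, φ a.1 w = 0) : ∃ c : ℝ, w = c • p :=
  hp.exists_smul_of_mem_Flat (h.mem_Flat w (hT ▸ Submodule.mem_top) hw)

/-- A vertex is determined, up to scaling, by `d` functionals vanishing there. -/
lemma IsVertex.exists_tuple (hV : Module.finrank ℝ V = d + 1) {p : V} (hp : IsVertex φ p) :
    ∃ τ : Fin d → κ, (∀ i, φ (τ i) p = 0) ∧
      ∀ w, (∀ i, φ (τ i) w = 0) → ∃ c : ℝ, w = c • p := by
  obtain ⟨T, L, S, hT, hF⟩ := exists_full_flag φ (fun _ => True) p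
  have hlen := hF.length_labels hV hp hT
  subst hlen
  refine ⟨fun i => (L.get i).1, fun i => hF.eq_zero _ (List.get_mem _ _), fun w hw => ?_⟩
  refine hF.exists_smul hp hT fun a ha => ?_
  obtain ⟨i, rfl⟩ := List.get_of_mem ha
  exact hw i

lemma List.exists_ofFn {α : Type} {L : List α} (h : L.length = d) :
    ∃ v : Fin d → α, List.ofFn v = L := by
  subst h
  exact ⟨L.get, List.ofFn_get L⟩

/-- If every code of `𝓛` is contained in a full flag with labels in `W`, there are at most
`|W| * 2 ^ (d + 1)` codes: by `FaceFlag.unique` the labels determine the flag, and a flag of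
`d + 1` faces has `2 ^ (d + 1)` subchains. -/
lemma card_codes_le (ψ : V →ₗ[ℝ] ℝ) (𝓛 : Set (List (κ → SignType)))
    (W : Finset (Fin d → κ × SignType))
    (H : ∀ L ∈ 𝓛, ∃ v ∈ W, ∃ p T S, IsVertex φ p ∧ 0 < ψ p ∧ Flat φ T = ⊤ ∧
      FaceFlag φ P p T (List.ofFn v) S ∧ L.Sublist S) :
    ∃ 𝓕 : Finset (List (κ → SignType)), 𝓛 ⊆ ↑𝓕 ∧ 𝓕.card ≤ W.card * 2 ^ (d + 1) := by
  let Q : (Fin d → κ × SignType) → List (κ → SignType) → Prop := fun v S =>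
    ∃ p T, IsVertex φ p ∧ 0 < ψ p ∧ Flat φ T = ⊤ ∧ FaceFlag φ P p T (List.ofFn v) S
  let S : (Fin d → κ × SignType) → List (κ → SignType) := fun v =>
    if h : ∃ S, Q v S then h.choose else []
  have hS : ∀ v S', Q v S' → S v = S' := by
    intro v S' h'
    have h : ∃ S, Q v S := ⟨S', h'⟩
    have e : S v = h.choose := dif_pos h
    rw [e]
    obtain ⟨p, T, h1, h2, h3, h4⟩ := h.choose_spec
    obtain ⟨p', T', h1', h2', h3', h4'⟩ := h'
    exact (FaceFlag.unique h1 h2 h2' h4 h4' (h3.trans h3'.symm)).1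
  have hlen : ∀ v, (S v).length ≤ d + 1 := by
    intro v
    by_cases h : ∃ S, Q v S
    · obtain ⟨S', h'⟩ := h
      rw [hS v S' h']
      obtain ⟨p', T', h1', h2', h3', h4'⟩ := h'
      rw [h4'.length_eq, List.length_ofFn]
    · have : S v = [] := dif_neg h
      simp [this]
  refine ⟨W.biUnion fun v => (S v).sublists.toFinset, ?_, ?_⟩
  · intro L hL
    obtain ⟨v, hv, p, T, S', h1, h2, h3, h4, h5⟩ := H L hL
    simp only [Finset.coe_biUnion, Set.mem_iUnion, Finset.mem_coe, List.mem_toFinset,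
      List.mem_sublists]
    exact ⟨v, hv, by rw [hS v S' ⟨p, T, h1, h2, h3, h4⟩]; exact h5⟩
  · refine Finset.card_biUnion_le_card_mul _ _ _ fun v _ => ?_
    refine (List.toFinset_card_le _).trans ?_
    rw [List.length_sublists]
    exact Nat.pow_le_pow_right (by norm_num) (hlen v)

/-- The number of `d`-tuples having at least one entry in `R`. -/
lemma card_hitting_le {α : Type} [Fintype α] (R : Finset α) (W : Finset (Fin d → α))
    (hW : ∀ v ∈ W, ∃ i, v i ∈ R) : W.card ≤ d * (R.card * Fintype.card α ^ (d - 1)) := by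
  have h : W ⊆ (Finset.univ : Finset (Fin d)).biUnion fun i =>
      Fintype.piFinset fun j => if j = i then R else Finset.univ := by
    intro v hv
    obtain ⟨i, hi⟩ := hW v hv
    simp only [Finset.mem_biUnion, Finset.mem_univ, true_and, Fintype.mem_piFinset]
    refine ⟨i, fun j => ?_⟩
    by_cases hj : j = i
    · subst hj; simpa using hi
    · simp [hj]
  refine (Finset.card_le_card h).trans ?_
  refine (Finset.card_biUnion_le_card_mul _ _ (R.card * Fintype.card α ^ (d - 1)) ?_).trans ?_
  · intro i _
    rw [Fintype.card_piFinset, ← Finset.mul_prod_erase _ _ (Finset.mem_univ i)]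
    simp only [if_true]
    rw [Finset.prod_congr rfl (g := fun _ => Fintype.card α)]
    · simp
    · intro j hj
      rw [if_neg (Finset.ne_of_mem_erase hj), Finset.card_univ]
  · simp

/-- Bound for the number of cells in the triangulation of a simplicial cone by `s` functionals;
it has order `s ^ d`. -/
def nF (d s : ℕ) : ℕ := (3 * (s + (d + 1))) ^ d * 2 ^ (d + 1)

/-- Bound for the number of cells when no vertex of the sample of `s` functionals lies in the
cone; it has order `s ^ (d - 1)`. -/
def nB (d s : ℕ) : ℕ := d * (3 * (d + 1) * (3 * (s + (d + 1))) ^ (d - 1)) * 2 ^ (d + 1)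

/-- Triangulation of the simplicial cone `coneOf β I` by the arrangement of the functionals `f`
together with the walls `β`. If no `d` functionals of `f` meet in a ray of the cone, every cell is
contained in a flag having some wall among its labels, so that there are only `nB d s` cells. The
last clause says that the vertices of a cell are determined by `d`-tuples of functionals, that no
functional of `f` separates two of them, and that a functional cutting the cell does. -/
lemma triangulate (hd : 1 ≤ d) (hV : Module.finrank ℝ V = d + 1) {β : Fin (d + 1) → V →ₗ[ℝ] ℝ}
    {I : Set (Fin (d + 1))} (hβ : ∀ w, (∀ i, β i w = 0) → w = 0)
    (f : Fin s → V →ₗ[ℝ] ℝ) :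
    ∃ T : Finset (Set V), (∀ Δ ∈ T, IsCone d Δ) ∧
      (∀ Δ ∈ T, ∀ Δ' ∈ T, Δ ≠ Δ' → Disjoint Δ Δ') ∧ ⋃₀ (T : Set (Set V)) = coneOf β I ∧
      T.card ≤ nF d s ∧
      ((∀ i : Fin d → Fin s, Function.Injective i → ¬ Good (f ∘ i) (coneOf β I)) →
        T.card ≤ nB d s) ∧
      ∀ Δ ∈ T, ∃ A : Finset (Fin d → Fin s ⊕ Fin (d + 1)), A.card ≤ d + 1 ∧
        (∀ τ ∈ A, ∀ τ' ∈ A, ∀ j, ¬ (0 < f j (pt (∑ i, β i) (Sum.elim f β ∘ τ)) ∧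
          f j (pt (∑ i, β i) (Sum.elim f β ∘ τ')) < 0)) ∧
        ∀ h : V →ₗ[ℝ] ℝ, Cuts h Δ → ∃ τ ∈ A, ∃ τ' ∈ A,
          0 < h (pt (∑ i, β i) (Sum.elim f β ∘ τ)) ∧
          h (pt (∑ i, β i) (Sum.elim f β ∘ τ')) < 0 := by
  set φ : Fin s ⊕ Fin (d + 1) → V →ₗ[ℝ] ℝ := Sum.elim f β with hφ
  set ψ : V →ₗ[ℝ] ℝ := ∑ i, β i with hψdef
  set P : Fin s ⊕ Fin (d + 1) → Prop := fun k => k.isRight = true with hP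
  have hess : ∀ w, (∀ k, φ k w = 0) → w = 0 := fun w hw => hβ w fun i => hw (Sum.inr i)
  have hcone : IsCone d (coneOf β I) := ⟨β, I, hβ, rfl⟩
  have hnn : ∀ {x p}, x ∈ coneOf β I → Below φ p x → ∀ i, 0 ≤ β i p := by
    intro x p hx hpx i
    have h := hpx (Sum.inr i)
    simp only [hφ, Sum.elim_inr] at h
    by_cases hi : i ∈ I
    · exact h.2.1 ((hx i).1 hi)
    · exact (h.1 ((hx i).2 hi)).ge
  have hψ : ∀ {x p}, x ∈ coneOf β I → Below φ p x → p ≠ 0 → 0 < ψ p := by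
    intro x p hx hpx hp
    rw [hψdef, LinearMap.sum_apply]
    refine Finset.sum_pos' (fun i _ => hnn hx hpx i) ?_
    by_contra! hc
    exact hp (hβ p fun i => le_antisymm (hc i (Finset.mem_univ _)) (hnn hx hpx i))
  set 𝓛 : Set (List (Fin s ⊕ Fin (d + 1) → SignType)) := {L | ∃ x ∈ coneOf β I, Code φ x L}
    with h𝓛
  have hinv : ∀ {x y L}, Code φ x L → Code φ y L → x ∈ coneOf β I → y ∈ coneOf β I := by
    intro x y L hx hy hxc i
    have h := (sg_eq_iff.1 (Code.sg_eq hx hy)) (Sum.inr i)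
    simp only [hφ, Sum.elim_inr] at h
    exact ⟨fun hi => h.2.1.1 ((hxc i).1 hi), fun hi => h.1.1 ((hxc i).2 hi)⟩
  -- `P` gives preference to the walls of the cone as labels of the flags
  have hflag : ∀ L ∈ 𝓛, L ≠ [] → ∃ x ∈ coneOf β I, ∃ v : Fin d → (Fin s ⊕ Fin (d + 1)) × SignType,
      ∃ p T S, IsVertex φ p ∧ Below φ p x ∧ Below φ x T ∧ 0 < ψ p ∧ Flat φ T = ⊤ ∧
      FaceFlag φ P p T (List.ofFn v) S ∧ L.Sublist S := by
    rintro L ⟨x, hx, hL⟩ hne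
    have hx0 : x ≠ 0 := by
      rintro rfl
      exact hne (hL.unique Code.nil)
    obtain ⟨p, T, L', S, hp, hpx, hxT, hT, hF, hsub⟩ := hL.exists_full_flag hess P hx0
    have hlen := hF.length_labels hV hp hT
    obtain ⟨v, rfl⟩ := List.exists_ofFn hlen
    exact ⟨x, hx, v, p, T, S, hp, hpx, hxT, hψ hx hpx hp.1, hT, hF, hsub⟩
  have hlenL : ∀ L ∈ 𝓛, L.length ≤ d + 1 := by
    intro L hL
    by_cases hne : L = []
    · simp [hne]
    · obtain ⟨x, -, v, p, T, S, -, -, -, -, -, hF, hsub⟩ := hflag L hL hne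
      have := hsub.length_le
      rwa [hF.length_eq, List.length_ofFn] at this
  have hzero : [] ∈ 𝓛 → 𝓛 ⊆ {[]} := by
    rintro ⟨x, hx, hc⟩ L ⟨y, hy, hL⟩
    cases hc
    have : y = 0 := by
      refine hβ y fun i => ?_
      by_cases hi : i ∈ I
      · have := (hx i).1 hi
        simp at this
      · exact (hy i).2 hi
    subst this
    exact hL.unique Code.nil
  have hcardκ : Fintype.card ((Fin s ⊕ Fin (d + 1)) × SignType) = 3 * (s + (d + 1)) := by
    have : Fintype.card SignType = 3 := rfl
    simp [this, mul_comm]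
  have hcount : ∀ (W : Finset (Fin d → (Fin s ⊕ Fin (d + 1)) × SignType)) (N : ℕ),
      W.card * 2 ^ (d + 1) ≤ N → 1 ≤ N → (∀ L ∈ 𝓛, L ≠ [] → ∃ v ∈ W, ∃ p T S, IsVertex φ p ∧
        0 < ψ p ∧ Flat φ T = ⊤ ∧ FaceFlag φ P p T (List.ofFn v) S ∧ L.Sublist S) →
      ∃ 𝓕 : Finset (List (Fin s ⊕ Fin (d + 1) → SignType)), 𝓛 ⊆ ↑𝓕 ∧ 𝓕.card ≤ N := by
    intro W N h1 h2 h3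
    by_cases h0 : [] ∈ 𝓛
    · exact ⟨{[]}, by simpa using hzero h0, by simpa using h2⟩
    · obtain ⟨𝓕, hF1, hF2⟩ := card_codes_le ψ 𝓛 W fun L hL => h3 L hL (by rintro rfl; exact h0 hL)
      exact ⟨𝓕, hF1, hF2.trans h1⟩
  obtain ⟨𝓕, h𝓕, hcardF⟩ := hcount Finset.univ (nF d s)
    (by rw [Finset.card_univ, Fintype.card_fun, hcardκ, Fintype.card_fin, nF])
    (Nat.one_le_iff_ne_zero.2 (by unfold nF; positivity)) (by
      intro L hL hne
      obtain ⟨x, -, v, p, T, S, h1, -, -, h2, h3, h4, h5⟩ := hflag L hL hne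
      exact ⟨v, Finset.mem_univ _, p, T, S, h1, h2, h3, h4, h5⟩)
  have hfin : 𝓛.Finite := 𝓕.finite_toSet.subset h𝓕
  set fib : List (Fin s ⊕ Fin (d + 1) → SignType) → Set V := fun L => {z | Code φ z L} with hfib
  have hcardT : ∀ 𝓕 : Finset (List (Fin s ⊕ Fin (d + 1) → SignType)), 𝓛 ⊆ ↑𝓕 →
      (hfin.toFinset.image fib).card ≤ 𝓕.card := by
    intro 𝓕 h
    refine Finset.card_image_le.trans (Finset.card_le_card ?_)
    intro L hL
    exact h (hfin.mem_toFinset.1 hL)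
  have hmem : ∀ Δ ∈ hfin.toFinset.image fib, ∃ L ∈ 𝓛, Δ = fib L := by
    intro Δ hΔ
    obtain ⟨L, hL, rfl⟩ := Finset.mem_image.1 hΔ
    exact ⟨L, hfin.mem_toFinset.1 hL, rfl⟩
  refine ⟨hfin.toFinset.image fib, ?_, ?_, ?_, (hcardT _ h𝓕).trans hcardF, ?_, ?_⟩
  · intro Δ hΔ
    obtain ⟨L, ⟨x, hx, hL⟩, rfl⟩ := hmem Δ hΔ
    exact hL.isCone hcone.zero hess
  · intro Δ hΔ Δ' hΔ' hne
    obtain ⟨L, -, rfl⟩ := hmem Δ hΔ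
    obtain ⟨L', -, rfl⟩ := hmem Δ' hΔ'
    rw [Set.disjoint_left]
    intro z hz hz'
    exact hne (by rw [Code.unique hz hz'])
  · ext z
    constructor
    · rintro ⟨Δ, hΔ, hz⟩
      obtain ⟨L, ⟨x, hx, hL⟩, rfl⟩ := hmem Δ hΔ
      exact hinv hL hz hx
    · intro hz
      obtain ⟨L, hL⟩ := Code.exists hess z
      exact ⟨fib L, Finset.mem_coe.2 (Finset.mem_image_of_mem _
        (hfin.mem_toFinset.2 ⟨z, hz, hL⟩)), hL⟩
  · intro hgood
    set R : Finset ((Fin s ⊕ Fin (d + 1)) × SignType) :=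
      Finset.univ.filter fun a => a.1.isRight = true with hR
    have hRcard : R.card ≤ 3 * (d + 1) := by
      have : R ⊆ (Finset.univ : Finset (Fin (d + 1) × SignType)).image
          fun a => (Sum.inr a.1, a.2) := by
        rintro ⟨k, σ⟩ hk
        simp only [hR, Finset.mem_filter, Finset.mem_univ, true_and] at hk
        obtain ⟨j, rfl⟩ := Sum.isRight_iff.1 hk
        exact Finset.mem_image.2 ⟨(j, σ), Finset.mem_univ _, rfl⟩
      refine (Finset.card_le_card this).trans (Finset.card_image_le.trans ?_)
      have : Fintype.card SignType = 3 := rfl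
      simp [this, mul_comm]
    obtain ⟨𝓕', h𝓕', hcardF'⟩ := hcount (Finset.univ.filter fun v => ∃ i, v i ∈ R) (nB d s) (by
        rw [nB]
        refine Nat.mul_le_mul_right _ ((card_hitting_le R _ fun v hv => (Finset.mem_filter.1 hv).2).trans ?_)
        rw [hcardκ]
        gcongr)
      (Nat.one_le_iff_ne_zero.2 (by unfold nB; have : d ≠ 0 := by omega
                                    positivity)) (by
        intro L hL hne
        obtain ⟨x, hx, v, p, T, S, h1, hpx, hxT, h2, h3, h4, h5⟩ := hflag L hL hne
        refine ⟨v, ?_, p, T, S, h1, h2, h3, h4, h5⟩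
        simp only [Finset.mem_filter, Finset.mem_univ, true_and]
        by_contra! hc
        -- otherwise all labels come from the sample, and `p` lies in the open cone
        have hnot : ∀ a ∈ List.ofFn v, ¬ P a.1 := by
          intro a ha hPa
          obtain ⟨i, rfl⟩ := (List.mem_ofFn' _ _).1 ha
          exact hc i (by simp only [hR, Finset.mem_filter, Finset.mem_univ, true_and]; exact hPa)
        have hpos : ∀ j, 0 < β j p := by
          intro j
          refine lt_of_le_of_ne (hnn hx hpx j) fun h0 => ?_
          have hTj := h4.preferred hnot (Sum.inr j) rfl h0.symm
          obtain ⟨w, hw⟩ := functional_ne_zero hV hβ j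
          have : w ∈ Flat φ T := h3 ▸ Submodule.mem_top
          exact hw (this (Sum.inr j) hTj)
        have hIu : ∀ j, j ∈ I := by
          intro j
          by_contra hj
          have h6 : 0 < β j x := hpx.pos (k := Sum.inr j) (hpos j)
          exact h6.ne' ((hx j).2 hj)
        have hlab : ∀ i, ∃ j, (v i).1 = Sum.inl j := by
          intro i
          have := hnot (v i) ((List.mem_ofFn' _ _).2 ⟨i, rfl⟩)
          simp only [hP] at this
          exact Sum.isLeft_iff.1 (by simpa using this)
        choose i hi using hlab
        refine hgood i ?_ ⟨p, fun j => ⟨fun _ => hpos j, fun h => absurd (hIu j) h⟩, h1.1, ?_, ?_⟩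
        · have hnd := h4.nodup
          rw [List.map_ofFn, List.nodup_ofFn] at hnd
          intro a b hab
          exact hnd (by simp [hi, hab])
        · intro a
          have := h4.eq_zero (v a) ((List.mem_ofFn' _ _).2 ⟨a, rfl⟩)
          rw [hi] at this
          exact this
        · intro w hw
          refine h4.exists_smul h1 h3 fun a ha => ?_
          obtain ⟨b, rfl⟩ := (List.mem_ofFn' _ _).1 ha
          rw [hi]
          exact hw b)
    exact (hcardT _ h𝓕').trans hcardF'
  · intro Δ hΔ
    obtain ⟨L, ⟨x, hx, hL⟩, rfl⟩ := hmem Δ hΔ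
    have hap := hL.apex_spec hess
    have htau : ∀ σ, ∃ τ : Fin d → Fin s ⊕ Fin (d + 1), σ ∈ L →
        ∃ c : ℝ, 0 < c ∧ apex φ σ = c • pt ψ (φ ∘ τ) := by
      intro σ
      by_cases hσ : σ ∈ L
      · obtain ⟨h1, h2⟩ := hap σ hσ
        obtain ⟨τ, h3, h4⟩ := h1.exists_tuple hV
        exact ⟨τ, fun _ => pt_spec (hψ hx h2 h1.1) h3 h4⟩
      · exact ⟨fun _ => Sum.inr 0, fun h => absurd h hσ⟩
    choose τ hτ using htau
    have hsgp : ∀ (h : V →ₗ[ℝ] ℝ), ∀ σ ∈ L, (0 < h (apex φ σ) ↔ 0 < h (pt ψ (φ ∘ τ σ))) ∧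
        (h (apex φ σ) < 0 ↔ h (pt ψ (φ ∘ τ σ)) < 0) := by
      intro h σ hσ
      obtain ⟨c, hc, he⟩ := hτ σ hσ
      rw [he, map_smul, smul_eq_mul]
      refine ⟨mul_pos_iff_of_pos_left hc, ?_⟩
      rw [mul_neg_iff]
      simp [hc, hc.not_gt]
    refine ⟨L.toFinset.image τ, ?_, ?_, ?_⟩
    · exact Finset.card_image_le.trans ((List.toFinset_card_le _).trans
        (hlenL L ⟨x, hx, hL⟩))
    · intro t ht t' ht' j ⟨h1, h2⟩
      obtain ⟨σ, hσ, rfl⟩ := Finset.mem_image.1 ht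
      obtain ⟨σ', hσ', rfl⟩ := Finset.mem_image.1 ht'
      rw [List.mem_toFinset] at hσ hσ'
      have h3 : 0 < φ (Sum.inl j) x := (hap σ hσ).2.pos ((hsgp (f j) σ hσ).1.2 h1)
      have h4 : φ (Sum.inl j) x < 0 := (hap σ' hσ').2.neg ((hsgp (f j) σ' hσ').2.2 h2)
      linarith
    · intro h hc
      obtain ⟨σ, hσ, σ', hσ', h1, h2⟩ := Code.exists_pos_neg_of_cuts hc
      exact ⟨τ σ, Finset.mem_image_of_mem _ (List.mem_toFinset.2 hσ), τ σ',
        Finset.mem_image_of_mem _ (List.mem_toFinset.2 hσ'), (hsgp h σ hσ).1.1 h1,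
        (hsgp h σ' hσ').2.1 h2⟩

end Triangulate

/-! ### Random samples -/

section Sampling
variable {M : Type} [Fintype M] {d s : ℕ}

/-- Double counting over the restriction of a sample to the coordinates in `J`. -/
lemma card_sample_le (J : Finset (Fin s)) (G : Finset (Fin s → M)) (K : Finset (J → M))
    (A : (J → M) → Finset M) (a : ℕ) (hK : ∀ f ∈ G, (fun j : J => f j) ∈ K)
    (hA : ∀ g ∈ K, (A g).card ≤ a) (hG : ∀ f ∈ G, ∀ j, f j ∈ A fun j : J => f j) :
    G.card ≤ a ^ (s - J.card) * K.card := by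
  refine Finset.card_le_mul_card_image_of_maps_to (f := fun f => fun j : J => f j) hK _ ?_
  intro g hg
  have hsub : G.filter (fun f => (fun j : J => f j) = g) ⊆
      Fintype.piFinset fun j => if h : j ∈ J then {g ⟨j, h⟩} else A g := by
    intro f hf
    obtain ⟨hfG, rfl⟩ := Finset.mem_filter.1 hf
    rw [Fintype.mem_piFinset]
    intro j
    by_cases hj : j ∈ J
    · simp [hj]
    · simpa [hj] using hG f hfG j
  refine (Finset.card_le_card hsub).trans ?_
  rw [Fintype.card_piFinset, ← Finset.prod_sdiff (Finset.subset_univ J)]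
  rw [Finset.prod_congr rfl (g := fun _ => (A g).card) (s₁ := Finset.univ \ J)]
  · rw [Finset.prod_congr rfl (g := fun _ => 1) (s₁ := J)]
    · rw [Finset.prod_const, Finset.prod_const_one, mul_one,
        Finset.card_sdiff_of_subset (Finset.subset_univ J), Finset.card_univ, Fintype.card_fin]
      exact Nat.pow_le_pow_left (hA g hg) _
    · intro j hj
      simp [hj]
  · intro j hj
    have : j ∉ J := (Finset.mem_sdiff.1 hj).2
    simp [this]

/-- The number of samples whose subtuple at the positions `i` satisfies `Q`. -/
lemma card_sample_tuple_le (i : Fin d → Fin s) (hi : Function.Injective i)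
    (Q : (Fin d → M) → Prop) :
    (Finset.univ.filter fun f : Fin s → M => Q (f ∘ i)).card ≤
      Fintype.card M ^ (s - d) * (Finset.univ.filter Q).card := by
  set J : Finset (Fin s) := Finset.univ.image i with hJ
  have hJc : J.card = d := by
    rw [hJ, Finset.card_image_of_injective _ hi, Finset.card_univ, Fintype.card_fin]
  have hmem : ∀ a, i a ∈ J := fun a => Finset.mem_image_of_mem _ (Finset.mem_univ a)
  have h := card_sample_le J (Finset.univ.filter fun f : Fin s → M => Q (f ∘ i))
    (Finset.univ.filter fun g : J → M => Q fun a => g ⟨i a, hmem a⟩) (fun _ => Finset.univ)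
    (Fintype.card M) (by
      intro f hf
      exact Finset.mem_filter.2 ⟨Finset.mem_univ _, (Finset.mem_filter.1 hf).2⟩) (fun _ _ => Finset.card_univ.le) (fun _ _ _ => Finset.mem_univ _)
  rw [hJc] at h
  refine h.trans (Nat.mul_le_mul_left _ ?_)
  refine Finset.card_le_card_of_injOn (fun g : J → M => fun a => g ⟨i a, hmem a⟩) ?_ ?_
  · intro g hg
    simpa using hg
  · intro g _ g' _ hgg
    funext ⟨j, hj⟩
    obtain ⟨a, -, rfl⟩ := Finset.mem_image.1 hj
    exact congrFun hgg a

/-- The probabilistic argument, as a count over all samples `f : Fin s → M`. There is a sample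
that avoids the rare property `Q` on all its `d`-tuples, and that meets every set `Sep τ τ' f` of
more than `ε |M|` elements; such a set depends only on the at most `2 d` sample points with indices
in `τ` and `τ'`, so the other sample points all miss it with probability at most
`(1 - ε) ^ (s - 2 d)`. -/
lemma exists_sample [Nonempty M] (hds : 2 * d ≤ s) (Q : (Fin d → M) → Prop)
    (hQ : 2 * s ^ d * (Finset.univ.filter Q).card < Fintype.card M ^ d)
    (Sep : (Fin d → Fin s ⊕ Fin (d + 1)) → (Fin d → Fin s ⊕ Fin (d + 1)) → (Fin s → M) → Finset M)
    (hSep : ∀ τ τ' f f', (∀ j, (∃ a, τ a = Sum.inl j ∨ τ' a = Sum.inl j) → f j = f' j) →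
      Sep τ τ' f = Sep τ τ' f')
    {ε : ℝ} (hε0 : 0 ≤ ε) (hε1 : ε ≤ 1)
    (hnum : 2 * ((s : ℝ) + (d + 1)) ^ (2 * d) * (1 - ε) ^ (s - 2 * d) ≤ 1) :
    ∃ f : Fin s → M, (∀ i : Fin d → Fin s, Function.Injective i → ¬ Q (f ∘ i)) ∧
      ∀ τ τ', ε * Fintype.card M < ((Sep τ τ' f).card : ℝ) → ∃ j, f j ∈ Sep τ τ' f := by
  set m := Fintype.card M with hm
  have hm0 : 0 < m := Fintype.card_pos
  set B1 : Finset (Fin s → M) := (Finset.univ.filter fun i : Fin d → Fin s =>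
    Function.Injective i).biUnion fun i => Finset.univ.filter fun f : Fin s → M => Q (f ∘ i) with hB1
  set bad : (Fin d → Fin s ⊕ Fin (d + 1)) × (Fin d → Fin s ⊕ Fin (d + 1)) → Finset (Fin s → M) :=
    fun τ => Finset.univ.filter fun f : Fin s → M =>
      ε * m < ((Sep τ.1 τ.2 f).card : ℝ) ∧ ∀ j, f j ∉ Sep τ.1 τ.2 f with hbad
  set B2 : Finset (Fin s → M) := Finset.univ.biUnion bad with hB2
  have h1 : 2 * B1.card < m ^ s := by
    have : B1.card ≤ s ^ d * (m ^ (s - d) * (Finset.univ.filter Q).card) := by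
      refine (Finset.card_biUnion_le_card_mul _ _ _ fun i hi =>
        card_sample_tuple_le i (Finset.mem_filter.1 hi).2 Q).trans (Nat.mul_le_mul_right _ ?_)
      refine (Finset.card_filter_le _ _).trans ?_
      simp
    calc 2 * B1.card ≤ 2 * (s ^ d * (m ^ (s - d) * (Finset.univ.filter Q).card)) := by omega
      _ = m ^ (s - d) * (2 * s ^ d * (Finset.univ.filter Q).card) := by ring
      _ < m ^ (s - d) * m ^ d := Nat.mul_lt_mul_of_pos_left hQ (by positivity)
      _ = m ^ s := by rw [← pow_add]; congr 1; omega
  have h2 : ∀ τ, ((bad τ).card : ℝ) ≤ (1 - ε) ^ (s - 2 * d) * (m : ℝ) ^ s := by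
    rintro ⟨τ, τ'⟩
    set J : Finset (Fin s) := Finset.univ.filter fun j => ∃ a, τ a = Sum.inl j ∨ τ' a = Sum.inl j
      with hJ
    have hJc : J.card ≤ 2 * d := by
      have : J ⊆ (Finset.univ : Finset (Fin d ⊕ Fin d)).biUnion fun a =>
          Finset.univ.filter fun j => Sum.elim τ τ' a = Sum.inl j := by
        intro j hj
        obtain ⟨a, ha | ha⟩ := (Finset.mem_filter.1 hj).2
        · simp only [Finset.mem_biUnion, Finset.mem_univ, true_and, Finset.mem_filter]
          exact ⟨Sum.inl a, ha⟩
        · simp only [Finset.mem_biUnion, Finset.mem_univ, true_and, Finset.mem_filter]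
          exact ⟨Sum.inr a, ha⟩
      refine (Finset.card_le_card this).trans
        ((Finset.card_biUnion_le_card_mul _ _ 1 fun a _ => ?_).trans (by simp [two_mul]))
      rw [Finset.card_le_one]
      intro j hj j' hj'
      have e1 := (Finset.mem_filter.1 hj).2
      have e2 := (Finset.mem_filter.1 hj').2
      exact Sum.inl_injective (e1.symm.trans e2)
    let x0 : M := Classical.arbitrary M
    let extd : (J → M) → Fin s → M := fun g j => if h : j ∈ J then g ⟨j, h⟩ else x0
    have hextd : ∀ f : Fin s → M, Sep τ τ' (extd fun j : J => f j) = Sep τ τ' f := by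
      intro f
      refine hSep _ _ _ _ fun j hj => ?_
      have : j ∈ J := Finset.mem_filter.2 ⟨Finset.mem_univ _, hj⟩
      simp [extd, this]
    have hc := card_sample_le J (bad (τ, τ'))
      (Finset.univ.filter fun g => ((Sep τ τ' (extd g))ᶜ).card ≤ ⌊(1 - ε) * m⌋₊)
      (fun g => (Sep τ τ' (extd g))ᶜ) ⌊(1 - ε) * m⌋₊ (by
        intro f hf
        simp only [hbad, Finset.mem_filter, Finset.mem_univ, true_and] at hf ⊢
        rw [hextd]
        apply Nat.le_floor
        rw [Finset.card_compl, Nat.cast_sub (Finset.card_le_univ _)]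
        linarith [hf.1]) (fun g hg => (Finset.mem_filter.1 hg).2) (by
        intro f hf j
        simp only [hbad, Finset.mem_filter, Finset.mem_univ, true_and] at hf
        rw [hextd, Finset.mem_compl]
        exact hf.2 j)
    have hK : (Finset.univ.filter fun g => ((Sep τ τ' (extd g))ᶜ).card ≤ ⌊(1 - ε) * m⌋₊).card
        ≤ m ^ J.card := by
      refine (Finset.card_filter_le _ _).trans ?_
      simp [hm]
    have h0 : 0 ≤ 1 - ε := by linarith
    calc ((bad (τ, τ')).card : ℝ) ≤ ((⌊(1 - ε) * m⌋₊ ^ (s - J.card) * m ^ J.card : ℕ) : ℝ) := by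
          exact_mod_cast hc.trans (Nat.mul_le_mul_left _ hK)
      _ = (⌊(1 - ε) * m⌋₊ : ℝ) ^ (s - J.card) * (m : ℝ) ^ J.card := by push_cast; ring
      _ ≤ ((1 - ε) * m) ^ (s - J.card) * (m : ℝ) ^ J.card := by
          gcongr
          exact Nat.floor_le (by positivity)
      _ = (1 - ε) ^ (s - J.card) * (m : ℝ) ^ s := by
          rw [mul_pow, mul_assoc, ← pow_add]
          congr 2
          omega
      _ ≤ _ := by
          gcongr ?_ * _
          exact pow_le_pow_of_le_one h0 (by linarith) (by omega)
  have h3 : (2 : ℝ) * B2.card ≤ (m : ℝ) ^ s := by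
    have hle : (B2.card : ℝ) ≤ ((s : ℝ) + (d + 1)) ^ (2 * d) *
        ((1 - ε) ^ (s - 2 * d) * (m : ℝ) ^ s) := by
      calc (B2.card : ℝ) ≤ ((∑ τ, (bad τ).card : ℕ) : ℝ) := by
            exact_mod_cast Finset.card_biUnion_le
        _ = ∑ τ, ((bad τ).card : ℝ) := by push_cast; rfl
        _ ≤ ∑ _τ : (Fin d → Fin s ⊕ Fin (d + 1)) × (Fin d → Fin s ⊕ Fin (d + 1)),
            (1 - ε) ^ (s - 2 * d) * (m : ℝ) ^ s := Finset.sum_le_sum fun τ _ => h2 τ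
        _ = _ := by
            rw [Finset.sum_const, nsmul_eq_mul, Finset.card_univ]
            congr 1
            simp
            ring
    have hp : (0 : ℝ) ≤ (m : ℝ) ^ s := by positivity
    nlinarith
  have h4 : (B1 ∪ B2).card < Fintype.card (Fin s → M) := by
    rw [Fintype.card_fun, Fintype.card_fin, ← hm]
    have h3' : 2 * B2.card ≤ m ^ s := by exact_mod_cast h3
    have := Finset.card_union_le B1 B2
    omega
  obtain ⟨f, hf⟩ : ∃ f, f ∉ B1 ∪ B2 := by
    by_contra! hc
    rw [Finset.eq_univ_of_forall hc, Finset.card_univ] at h4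
    exact lt_irrefl _ h4
  rw [Finset.mem_union, not_or] at hf
  refine ⟨f, fun i hi hQi => hf.1 ?_, fun τ τ' hlt => ?_⟩
  · simp only [hB1, Finset.mem_biUnion, Finset.mem_filter, Finset.mem_univ, true_and]
    exact ⟨i, hi, hQi⟩
  · by_contra! hc
    apply hf.2
    simp only [hB2, hbad, Finset.mem_biUnion, Finset.mem_filter, Finset.mem_univ, true_and]
    exact ⟨(τ, τ'), hlt, hc⟩

end Sampling

/-! ### Refining a cutting -/

section Refine
variable {V : Type} [AddCommGroup V] [Module ℝ V] [FiniteDimensional ℝ V] {d s : ℕ}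
variable {η : Type} [Fintype η] (fn : η → V →ₗ[ℝ] ℝ)

/-- The functionals of the family `fn` that cut `Δ`. -/
noncomputable def cutters (Δ : Set V) : Finset η := Finset.univ.filter fun h => Cuts (fn h) Δ

/-- The number of `d`-tuples of functionals of the family whose common kernel is a line spanned by
a point of `Δ`. -/
noncomputable def vertexCount (d : ℕ) (Δ : Set V) : ℕ :=
  (Finset.univ.filter fun t : Fin d → η => Good (fn ∘ t) Δ).card

lemma nF_pos : 1 ≤ nF d s := Nat.one_le_iff_ne_zero.2 (by unfold nF; positivity)

lemma nB_pos (hd : 1 ≤ d) : 1 ≤ nB d s := by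
  have : d ≠ 0 := by omega
  exact Nat.one_le_iff_ne_zero.2 (by unfold nB; positivity)

/-- A simplicial cone cut by at most `ρ θ` functionals is divided into cones cut by at most `θ`
functionals each: triangulate with a sample of `s` functionals as in `exists_sample`. If the cone
contains few vertices of the family, the sample is chosen without vertices in the cone, and `nB d s`
cones suffice. -/
lemma refine_cell (hd : 1 ≤ d) (hV : Module.finrank ℝ V = d + 1) (hds : 2 * d ≤ s) {ε ρ θ : ℝ}
    (hε0 : 0 ≤ ε) (hε1 : ε ≤ 1)
    (hnum : 2 * ((s : ℝ) + (d + 1)) ^ (2 * d) * (1 - ε) ^ (s - 2 * d) ≤ 1)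
    (hερ : ((d : ℝ) + 1) ^ 2 * ε * ρ ≤ 1) (hθ : 0 < θ)
    {Δ : Set V} (hΔ : IsCone d Δ) (hcut : ((cutters fn Δ).card : ℝ) ≤ ρ * θ) :
    ∃ T : Finset (Set V), (∀ Δ' ∈ T, IsCone d Δ') ∧
      (∀ Δ₁ ∈ T, ∀ Δ₂ ∈ T, Δ₁ ≠ Δ₂ → Disjoint Δ₁ Δ₂) ∧ ⋃₀ (T : Set (Set V)) = Δ ∧
      T.card ≤ nF d s ∧
      (2 * (s : ℝ) ^ d * vertexCount fn d Δ < θ ^ d → T.card ≤ nB d s) ∧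
      ∀ Δ' ∈ T, ((cutters fn Δ').card : ℝ) ≤ θ := by
  by_cases hsmall : ((cutters fn Δ).card : ℝ) ≤ θ
  · refine ⟨{Δ}, by simpa using hΔ, ?_, by simp, by simpa using nF_pos,
      fun _ => by simpa using nB_pos hd, by simpa using hsmall⟩
    intro Δ₁ h1 Δ₂ h2 hne
    rw [Finset.mem_singleton] at h1 h2
    exact absurd (h1.trans h2.symm) hne
  push Not at hsmall
  obtain ⟨β, I, hβ, rfl⟩ := hΔ
  set Δ := coneOf β I with hΔdef
  let M : Type := {h : η // Cuts (fn h) Δ}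
  have hcard : Fintype.card M = (cutters fn Δ).card := Fintype.card_subtype _
  have hm : θ < (Fintype.card M : ℝ) := by rw [hcard]; exact hsmall
  have hm0 : 0 < Fintype.card M := by exact_mod_cast hθ.trans hm
  have : Nonempty M := Fintype.card_pos_iff.1 hm0
  let Q : (Fin d → M) → Prop := fun t => 2 * (s : ℝ) ^ d * vertexCount fn d Δ < θ ^ d ∧
    Good (fun i => fn (t i).1) Δ
  have hQ : 2 * s ^ d * (Finset.univ.filter Q).card < Fintype.card M ^ d := by
    by_cases hsp : 2 * (s : ℝ) ^ d * vertexCount fn d Δ < θ ^ d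
    · have h1 : (Finset.univ.filter Q).card ≤ vertexCount fn d Δ := by
        refine Finset.card_le_card_of_injOn (fun t i => (t i).1) ?_ ?_
        · intro t ht
          exact Finset.mem_coe.2 (Finset.mem_filter.2 ⟨Finset.mem_univ _,
            (Finset.mem_filter.1 (Finset.mem_coe.1 ht)).2.2⟩)
        · intro t _ t' _ htt
          funext i
          exact Subtype.ext (congrFun htt i)
      have h2 : (2 * (s : ℝ) ^ d * ((Finset.univ.filter Q).card : ℝ)) < (Fintype.card M : ℝ) ^ d :=
        calc (2 * (s : ℝ) ^ d * ((Finset.univ.filter Q).card : ℝ))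
            ≤ 2 * (s : ℝ) ^ d * vertexCount fn d Δ := by gcongr
          _ < θ ^ d := hsp
          _ ≤ _ := by gcongr
      exact_mod_cast h2
    · have : Finset.univ.filter Q = ∅ := by
        rw [Finset.filter_eq_empty_iff]
        exact fun t _ h => hsp h.1
      rw [this]
      simpa using Nat.pow_pos hm0
  let F : (Fin s → M) → Fin s → V →ₗ[ℝ] ℝ := fun f j => fn (f j).1
  let ψ : V →ₗ[ℝ] ℝ := ∑ i, β i
  let Sep : (Fin d → Fin s ⊕ Fin (d + 1)) → (Fin d → Fin s ⊕ Fin (d + 1)) → (Fin s → M) →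
      Finset M := fun τ τ' f => Finset.univ.filter fun h : M =>
    0 < fn h.1 (pt ψ (Sum.elim (F f) β ∘ τ)) ∧ fn h.1 (pt ψ (Sum.elim (F f) β ∘ τ')) < 0
  obtain ⟨f, hf1, hf2⟩ := exists_sample hds Q (by convert hQ) Sep (by
    intro τ τ' f f' hff
    have e1 : Sum.elim (F f) β ∘ τ = Sum.elim (F f') β ∘ τ := by
      funext a
      rcases h : τ a with j | j
      · simp [h, F, hff j ⟨a, Or.inl h⟩]
      · simp [h]
    have e2 : Sum.elim (F f) β ∘ τ' = Sum.elim (F f') β ∘ τ' := by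
      funext a
      rcases h : τ' a with j | j
      · simp [h, F, hff j ⟨a, Or.inr h⟩]
      · simp [h]
    simp only [Sep, e1, e2]) hε0 hε1 hnum
  obtain ⟨T, hT1, hT2, hT3, hT4, hT5, hT6⟩ := triangulate hd hV (I := I) hβ (F f)
  refine ⟨T, hT1, hT2, hT3, hT4, fun hsp => hT5 fun i hi hg => hf1 i hi ⟨hsp, hg⟩, ?_⟩
  intro Δ' hΔ'
  obtain ⟨A, hA1, hA2, hA3⟩ := hT6 Δ' hΔ'
  have hsub : Δ' ⊆ Δ := by
    rw [hΔdef, ← hT3]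
    exact Set.subset_sUnion_of_mem (Finset.mem_coe.2 hΔ')
  have hle : (cutters fn Δ').card ≤ ∑ q ∈ A ×ˢ A, (Sep q.1 q.2 f).card := by
    have : cutters fn Δ' ⊆ (A ×ˢ A).biUnion fun q => (Sep q.1 q.2 f).image Subtype.val := by
      intro h hh
      have hc : Cuts (fn h) Δ' := (Finset.mem_filter.1 hh).2
      obtain ⟨τ, hτ, τ', hτ', h1, h2⟩ := hA3 (fn h) hc
      refine Finset.mem_biUnion.2 ⟨(τ, τ'), Finset.mem_product.2 ⟨hτ, hτ'⟩, ?_⟩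
      exact Finset.mem_image.2 ⟨⟨h, hc.mono hsub⟩,
        Finset.mem_filter.2 ⟨Finset.mem_univ _, h1, h2⟩, rfl⟩
    refine (Finset.card_le_card this).trans (Finset.card_biUnion_le.trans ?_)
    exact Finset.sum_le_sum fun q _ => Finset.card_image_le
  have hq : ∀ q ∈ A ×ˢ A, ((Sep q.1 q.2 f).card : ℝ) ≤ ε * Fintype.card M := by
    rintro ⟨τ, τ'⟩ hq
    obtain ⟨hτ, hτ'⟩ := Finset.mem_product.1 hq
    by_contra! hlt
    obtain ⟨j, hj⟩ := hf2 τ τ' hlt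
    exact hA2 τ hτ τ' hτ' j (Finset.mem_filter.1 hj).2
  have hA : (A.card : ℝ) ≤ (d : ℝ) + 1 := by exact_mod_cast hA1
  calc ((cutters fn Δ').card : ℝ) ≤ ((∑ q ∈ A ×ˢ A, (Sep q.1 q.2 f).card : ℕ) : ℝ) := by
        exact_mod_cast hle
    _ = ∑ q ∈ A ×ˢ A, ((Sep q.1 q.2 f).card : ℝ) := by push_cast; rfl
    _ ≤ ∑ _q ∈ A ×ˢ A, ε * Fintype.card M := Finset.sum_le_sum hq
    _ = (A.card : ℝ) ^ 2 * (ε * Fintype.card M) := by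
        rw [Finset.sum_const, Finset.card_product, nsmul_eq_mul]
        push_cast
        ring
    _ ≤ ((d : ℝ) + 1) ^ 2 * (ε * (ρ * θ)) := by
        rw [hcard]
        gcongr
    _ = (((d : ℝ) + 1) ^ 2 * ε * ρ) * θ := by ring
    _ ≤ 1 * θ := by gcongr
    _ = θ := one_mul θ

/-- Among disjoint cones, at most two contain a generator of a given line, one for each of its two
rays. -/
lemma sum_vertexCount_le (Ξ : Finset (Set V)) (hc : ∀ Δ ∈ Ξ, IsCone d Δ)
    (hdis : ∀ Δ₁ ∈ Ξ, ∀ Δ₂ ∈ Ξ, Δ₁ ≠ Δ₂ → Disjoint Δ₁ Δ₂) :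
    ∑ Δ ∈ Ξ, vertexCount fn d Δ ≤ 2 * Fintype.card η ^ d := by
  have h1 : ∑ Δ ∈ Ξ, vertexCount fn d Δ =
      ∑ t : Fin d → η, (Ξ.filter fun Δ => Good (fn ∘ t) Δ).card := by
    simp only [vertexCount, Finset.card_filter]
    exact Finset.sum_comm
  rw [h1]
  have h2 : ∀ t : Fin d → η, (Ξ.filter fun Δ => Good (fn ∘ t) Δ).card ≤ 2 := by
    intro t
    rcases (Ξ.filter fun Δ => Good (fn ∘ t) Δ).eq_empty_or_nonempty with h | ⟨Δ0, h⟩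
    · simp [h]
    obtain ⟨p, -, hp0, -, hp⟩ := (Finset.mem_filter.1 h).2
    have key : ∀ Δ ∈ Ξ.filter fun Δ => Good (fn ∘ t) Δ, p ∈ Δ ∨ -p ∈ Δ := by
      intro Δ hΔ
      obtain ⟨hΔ, q, hq, hq0, hqt, -⟩ := Finset.mem_filter.1 hΔ
      obtain ⟨c, rfl⟩ := hp q hqt
      have hc0 : c ≠ 0 := by
        rintro rfl
        simp at hq0
      rcases lt_or_gt_of_ne hc0 with h | h
      · right
        have := (hc Δ hΔ).smul_mem hq (c := (-c)⁻¹) (by simpa using h)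
        rwa [smul_smul, inv_neg, neg_mul, inv_mul_cancel₀ hc0, neg_one_smul] at this
      · left
        have := (hc Δ hΔ).smul_mem hq (c := c⁻¹) (by simpa using h)
        rwa [smul_smul, inv_mul_cancel₀ hc0, one_smul] at this
    have := Finset.card_le_card_of_injOn (s := Ξ.filter fun Δ => Good (fn ∘ t) Δ)
      (t := (Finset.univ : Finset Bool)) (fun Δ => decide (p ∈ Δ))
      (fun _ _ => Finset.mem_coe.2 (Finset.mem_univ _)) (by
        intro Δ hΔ Δ' hΔ' he
        by_contra hne
        have hd' := hdis Δ (Finset.mem_filter.1 hΔ).1 Δ' (Finset.mem_filter.1 hΔ').1 hne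
        rw [Set.disjoint_left] at hd'
        simp only [decide_eq_decide] at he
        rcases key Δ hΔ with h | h
        · exact hd' h (he.1 h)
        · by_cases hpΔ : p ∈ Δ
          · exact hd' hpΔ (he.1 hpΔ)
          · exact hd' h ((key Δ' hΔ').resolve_left (mt he.2 hpΔ)))
    simpa using this
  calc _ ≤ ∑ _t : Fin d → η, 2 := Finset.sum_le_sum fun t _ => h2 t
    _ = _ := by simp [mul_comm]

/-- `Ξ` is a cutting of level `i`: a partition of `V` into at most `C * ρ ^ (i * d)` simplicial
cones, each cut by at most `n / ρ ^ i` functionals of the family `fn` of `n` functionals. -/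
structure IsLevel (d C : ℕ) (ρ : ℝ) (i : ℕ) (Ξ : Finset (Set V)) : Prop where
  cone : ∀ Δ ∈ Ξ, IsCone d Δ
  disj : ∀ Δ₁ ∈ Ξ, ∀ Δ₂ ∈ Ξ, Δ₁ ≠ Δ₂ → Disjoint Δ₁ Δ₂
  cover : ⋃₀ (Ξ : Set (Set V)) = Set.univ
  card_le : (Ξ.card : ℝ) ≤ C * ρ ^ (i * d)
  cut : ∀ Δ ∈ Ξ, ((cutters fn Δ).card : ℝ) ≤ Fintype.card η / ρ ^ i

/-- Refining each cone of a cutting of level `i` gives a cutting of level `i + 1`. Cones with few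
vertices contribute at most `nB d s * |Ξ| ≤ C * ρ ^ ((i + 1) * d) / 2` cells in total. The other
cones contribute up to `nF d s` cells each, but their number is at most
`4 * s ^ d * ρ ^ ((i + 1) * d)`, because by `sum_vertexCount_le` there are at most `2 * n ^ d`
vertices in all. -/
lemma IsLevel.step [Nonempty η] (hd : 1 ≤ d) (hV : Module.finrank ℝ V = d + 1) (hds : 2 * d ≤ s)
    {ε ρ : ℝ} (hε0 : 0 ≤ ε) (hε1 : ε ≤ 1) (hρ : 1 < ρ)
    (hnum : 2 * ((s : ℝ) + (d + 1)) ^ (2 * d) * (1 - ε) ^ (s - 2 * d) ≤ 1)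
    (hερ : ((d : ℝ) + 1) ^ 2 * ε * ρ ≤ 1) (hB : 2 * (nB d s : ℝ) ≤ ρ ^ d) {C : ℕ}
    (hC : 8 * nF d s * s ^ d ≤ C) (hFC : nF d s ≤ C) {i : ℕ} {Ξ : Finset (Set V)}
    (h : IsLevel fn d C ρ i Ξ) :
    ∃ Ξ', IsLevel fn d C ρ (i + 1) Ξ' ∧ ∀ Δ ∈ Ξ, ∃ G ⊆ Ξ', G.card ≤ C ∧
      Δ = ⋃₀ (G : Set (Set V)) := by
  set n : ℝ := (Fintype.card η : ℝ) with hn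
  have hn0 : 0 < n := by rw [hn]; exact_mod_cast Fintype.card_pos
  have hρ0 : 0 < ρ := by linarith
  set θ : ℝ := n / ρ ^ (i + 1) with hθdef
  have hθ : 0 < θ := by positivity
  have hρθ : ρ * θ = n / ρ ^ i := by rw [hθdef, pow_succ]; field_simp
  have hex : ∀ Δ : Set V, ∃ T : Finset (Set V), Δ ∈ Ξ → (∀ Δ' ∈ T, IsCone d Δ') ∧
      (∀ Δ₁ ∈ T, ∀ Δ₂ ∈ T, Δ₁ ≠ Δ₂ → Disjoint Δ₁ Δ₂) ∧ ⋃₀ (T : Set (Set V)) = Δ ∧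
      T.card ≤ nF d s ∧
      (2 * (s : ℝ) ^ d * vertexCount fn d Δ < θ ^ d → T.card ≤ nB d s) ∧
      ∀ Δ' ∈ T, ((cutters fn Δ').card : ℝ) ≤ θ := by
    intro Δ
    by_cases hΔ : Δ ∈ Ξ
    · obtain ⟨T, hT⟩ := refine_cell fn hd hV hds hε0 hε1 hnum hερ hθ (h.cone Δ hΔ)
        (by rw [hρθ]; exact h.cut Δ hΔ)
      exact ⟨T, fun _ => hT⟩
    · exact ⟨∅, fun h => absurd h hΔ⟩
  choose T hT using hex
  have hsub : ∀ Δ ∈ Ξ, ∀ Δ' ∈ T Δ, Δ' ⊆ Δ := by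
    intro Δ hΔ Δ' hΔ'
    conv_rhs => rw [← (hT Δ hΔ).2.2.1]
    exact Set.subset_sUnion_of_mem (Finset.mem_coe.2 hΔ')
  refine ⟨Ξ.biUnion T, ⟨?_, ?_, ?_, ?_, ?_⟩, ?_⟩
  · intro Δ' hΔ'
    obtain ⟨Δ, hΔ, hm⟩ := Finset.mem_biUnion.1 hΔ'
    exact (hT Δ hΔ).1 Δ' hm
  · intro Δ₁ h1 Δ₂ h2 hne
    obtain ⟨Δ, hΔ, hm⟩ := Finset.mem_biUnion.1 h1
    obtain ⟨Δ', hΔ', hm'⟩ := Finset.mem_biUnion.1 h2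
    by_cases he : Δ = Δ'
    · subst he
      exact (hT Δ hΔ).2.1 Δ₁ hm Δ₂ hm' hne
    · exact (h.disj Δ hΔ Δ' hΔ' he).mono (hsub Δ hΔ _ hm) (hsub Δ' hΔ' _ hm')
  · rw [Set.eq_univ_iff_forall]
    intro x
    have hx : x ∈ ⋃₀ (Ξ : Set (Set V)) := by rw [h.cover]; trivial
    obtain ⟨Δ, hΔ, hxΔ⟩ := hx
    rw [← (hT Δ hΔ).2.2.1] at hxΔ
    obtain ⟨Δ', hΔ', hx'⟩ := hxΔ
    exact ⟨Δ', Finset.mem_coe.2 (Finset.mem_biUnion.2 ⟨Δ, hΔ, hΔ'⟩), hx'⟩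
  · set N : Finset (Set V) := Ξ.filter fun Δ => θ ^ d ≤ 2 * (s : ℝ) ^ d * vertexCount fn d Δ with hN
    have hNle : (N.card : ℝ) * θ ^ d ≤ 4 * (s : ℝ) ^ d * n ^ d := by
      have h1 : (N.card : ℝ) * θ ^ d ≤ ∑ Δ ∈ N, 2 * (s : ℝ) ^ d * vertexCount fn d Δ := by
        rw [← nsmul_eq_mul]
        exact Finset.card_nsmul_le_sum _ _ _ fun Δ hΔ => (Finset.mem_filter.1 hΔ).2
      have h2 : ∑ Δ ∈ N, 2 * (s : ℝ) ^ d * vertexCount fn d Δ ≤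
          ∑ Δ ∈ Ξ, 2 * (s : ℝ) ^ d * vertexCount fn d Δ :=
        Finset.sum_le_sum_of_subset_of_nonneg (Finset.filter_subset _ _)
          fun _ _ _ => by positivity
      have h3 : (∑ Δ ∈ Ξ, (vertexCount fn d Δ : ℝ)) ≤ 2 * n ^ d := by
        have := sum_vertexCount_le fn Ξ h.cone h.disj
        rw [hn]
        exact_mod_cast this
      simp only [← Finset.mul_sum] at h1 h2
      calc _ ≤ _ := h1.trans h2
        _ ≤ 2 * (s : ℝ) ^ d * (2 * n ^ d) := by gcongr
        _ = _ := by ring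
    have hN2 : (N.card : ℝ) ≤ 4 * (s : ℝ) ^ d * ρ ^ ((i + 1) * d) := by
      rw [hθdef, div_pow, ← pow_mul, mul_div_assoc', div_le_iff₀ (by positivity)] at hNle
      have hnd : 0 < n ^ d := by positivity
      nlinarith
    have hcard : (Ξ.biUnion T).card ≤ nB d s * Ξ.card + nF d s * N.card := by
      calc (Ξ.biUnion T).card ≤ ∑ Δ ∈ Ξ, (T Δ).card := Finset.card_biUnion_le
        _ ≤ ∑ Δ ∈ Ξ, (nB d s + if θ ^ d ≤ 2 * (s : ℝ) ^ d * vertexCount fn d Δ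
            then nF d s else 0) := by
            refine Finset.sum_le_sum fun Δ hΔ => ?_
            split_ifs with hns
            · exact ((hT Δ hΔ).2.2.2.1).trans (Nat.le_add_left _ _)
            · exact (hT Δ hΔ).2.2.2.2.1 (not_le.1 hns)
        _ = _ := by
            rw [Finset.sum_add_distrib, Finset.sum_const, ← Finset.sum_filter, Finset.sum_const,
              smul_eq_mul, smul_eq_mul]
            ring
    have hC' : (8 * nF d s * s ^ d : ℝ) ≤ C := by exact_mod_cast hC
    have e : ρ ^ ((i + 1) * d) = ρ ^ d * ρ ^ (i * d) := by rw [← pow_add]; congr 1; ring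
    have hp : 0 < ρ ^ (i * d) := by positivity
    have hp' : 0 < ρ ^ ((i + 1) * d) := by positivity
    calc ((Ξ.biUnion T).card : ℝ) ≤ nB d s * Ξ.card + nF d s * N.card := by exact_mod_cast hcard
      _ ≤ nB d s * (C * ρ ^ (i * d)) + nF d s * (4 * (s : ℝ) ^ d * ρ ^ ((i + 1) * d)) := by
          gcongr
          exact h.card_le
      _ = (C : ℝ) * (2 * nB d s) * ρ ^ (i * d) / 2 +
          (8 * nF d s * s ^ d) * ρ ^ ((i + 1) * d) / 2 := by ring
      _ ≤ (C : ℝ) * ρ ^ d * ρ ^ (i * d) / 2 + C * ρ ^ ((i + 1) * d) / 2 := by gcongr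
      _ = C * ρ ^ ((i + 1) * d) := by rw [e]; ring
  · intro Δ' hΔ'
    obtain ⟨Δ, hΔ, hm⟩ := Finset.mem_biUnion.1 hΔ'
    exact (hT Δ hΔ).2.2.2.2.2 Δ' hm
  · intro Δ hΔ
    exact ⟨T Δ, Finset.subset_biUnion_of_mem T hΔ, ((hT Δ hΔ).2.2.2.1).trans hFC,
      ((hT Δ hΔ).2.2.1).symm⟩

/-- The `3 ^ (d + 1)` faces of the coordinate arrangement form a cutting of level `0`. -/
lemma IsLevel.zero {β : Fin (d + 1) → V →ₗ[ℝ] ℝ} (hβ : ∀ w, (∀ i, β i w = 0) → w = 0) {C : ℕ}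
    (hC : 3 ^ (d + 1) ≤ C) (ρ : ℝ) : ∃ Ξ, IsLevel fn d C ρ 0 Ξ := by
  let cell : (Fin (d + 1) → SignType) → Set V := fun σ => {x | sg β x = σ}
  refine ⟨Finset.univ.image cell, ?_, ?_, ?_, ?_, ?_⟩
  · intro Δ hΔ
    obtain ⟨σ, -, rfl⟩ := Finset.mem_image.1 hΔ
    refine ⟨fun i => if σ i = -1 then -β i else β i, {i | σ i ≠ 0}, ?_, ?_⟩
    · intro w hw
      refine hβ w fun i => ?_
      have := hw i
      by_cases h : σ i = -1
      · simpa [h] using this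
      · simpa [h] using this
    · ext x
      have : x ∈ cell σ ↔ ∀ i, SignType.sign (β i x) = σ i := funext_iff
      rw [this]
      refine forall_congr' fun i => ?_
      have h3 : ∀ τ : SignType, τ = 0 ∨ τ = -1 ∨ τ = 1 := by decide
      rcases h3 (σ i) with h | h | h
      · simp [h]
      · simp [h, sign_eq_neg_one_iff]
      · simp [h, sign_eq_one_iff]
  · intro Δ₁ h1 Δ₂ h2 hne
    obtain ⟨σ, -, rfl⟩ := Finset.mem_image.1 h1
    obtain ⟨σ', -, rfl⟩ := Finset.mem_image.1 h2
    rw [Set.disjoint_left]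
    intro x hx hx'
    have hx : sg β x = σ := hx
    have hx' : sg β x = σ' := hx'
    exact hne (by rw [← hx, ← hx'])
  · rw [Set.eq_univ_iff_forall]
    intro x
    exact ⟨cell (sg β x), Finset.mem_coe.2 (Finset.mem_image_of_mem _ (Finset.mem_univ _)), rfl⟩
  · have : (Finset.univ.image cell).card ≤ 3 ^ (d + 1) := by
      refine Finset.card_image_le.trans ?_
      have : Fintype.card SignType = 3 := rfl
      simp [this]
    simpa using (by exact_mod_cast this.trans hC : ((Finset.univ.image cell).card : ℝ) ≤ C)
  · intro Δ _
    simpa using Finset.card_le_univ (cutters fn Δ)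

end Refine

/-! ### Constants, and the passage to affine space -/

/-- The constants are `ρ = q ^ (2 d)`, `s = q ^ (2 d + 1)` and `ε = 1 / ((d + 1) ^ 2 ρ)` with `q`
large. Then `ε s` grows linearly in `q`, which makes `(1 - ε) ^ (s - 2 d)` beat any polynomial, and
`s ^ (d - 1)` is smaller than `ρ ^ d` by at least a factor `q ^ (d + 1)`. -/
lemma exists_constants (d : ℕ) (hd : 1 ≤ d) : ∃ (s : ℕ) (ρ ε : ℝ), 2 * d ≤ s ∧ 1 < ρ ∧ 0 ≤ ε ∧
    ε ≤ 1 ∧ 2 * ((s : ℝ) + (d + 1)) ^ (2 * d) * (1 - ε) ^ (s - 2 * d) ≤ 1 ∧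
    ((d : ℝ) + 1) ^ 2 * ε * ρ ≤ 1 ∧ 2 * (nB d s : ℝ) ≤ ρ ^ d := by
  set b : ℝ := (2 * ((d : ℝ) + 1) ^ 2)⁻¹ with hb
  have hb0 : 0 < b := by positivity
  set K : ℕ := 2 * (d * (3 * (d + 1) * 6 ^ (d - 1)) * 2 ^ (d + 1)) with hK
  have hlim : Filter.Tendsto (fun q : ℕ => 2 * 2 ^ (2 * d) *
      ((q : ℝ) ^ ((2 * d + 1) * (2 * d)) * Real.exp (-b * q))) Filter.atTop (nhds 0) := by
    have h := (tendsto_rpow_mul_exp_neg_mul_atTop_nhds_zero (((2 * d + 1) * (2 * d) : ℕ) : ℝ) b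
      hb0).comp (tendsto_natCast_atTop_atTop (R := ℝ))
    have h2 := h.const_mul (2 * 2 ^ (2 * d) : ℝ)
    rw [mul_zero] at h2
    refine h2.congr fun q => ?_
    simp only [Function.comp_apply, Real.rpow_natCast]
  obtain ⟨q, hq1, hqK, hqd, hqexp⟩ := ((Filter.eventually_ge_atTop 2).and
    ((Filter.eventually_ge_atTop K).and ((Filter.eventually_ge_atTop (4 * d + 1)).and
      (hlim.eventually (ge_mem_nhds one_pos))))).exists
  set s : ℕ := q ^ (2 * d + 1) with hs
  set ρ : ℝ := (q : ℝ) ^ (2 * d) with hρ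
  have hqs : q ≤ s := Nat.le_self_pow (by omega) q
  have hq2 : (2 : ℝ) ≤ q := by exact_mod_cast hq1
  have hρ1 : 1 < ρ := one_lt_pow₀ (by linarith) (by omega)
  have hsR : (s : ℝ) = q * ρ := by rw [hs, hρ]; push_cast; ring
  have hds : (s : ℝ) + (d + 1) ≤ 2 * s := by
    have : s + (d + 1) ≤ 2 * s := by omega
    exact_mod_cast this
  refine ⟨s, ρ, (((d : ℝ) + 1) ^ 2 * ρ)⁻¹, by omega, hρ1, by positivity, ?_, ?_, ?_, ?_⟩
  · apply inv_le_one_of_one_le₀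
    have : (1 : ℝ) ≤ (d : ℝ) + 1 := by linarith [(Nat.cast_nonneg d : (0 : ℝ) ≤ d)]
    nlinarith
  · set ε : ℝ := (((d : ℝ) + 1) ^ 2 * ρ)⁻¹ with hε
    have hε0 : 0 < ε := by positivity
    have hε1 : ε ≤ 1 := by
      apply inv_le_one_of_one_le₀
      have : (1 : ℝ) ≤ (d : ℝ) + 1 := by linarith [(Nat.cast_nonneg d : (0 : ℝ) ≤ d)]
      nlinarith
    have h1 : (1 - ε) ^ (s - 2 * d) ≤ Real.exp (-b * q) := by
      have h2 : (1 - ε) ^ (s - 2 * d) ≤ Real.exp (-ε) ^ (s - 2 * d) := by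
        have := Real.add_one_le_exp (-ε)
        exact pow_le_pow_left₀ (by linarith) (by linarith) _
      refine h2.trans ?_
      rw [← Real.exp_nat_mul]
      apply Real.exp_le_exp.2
      have h3 : (s : ℝ) / 2 ≤ ((s - 2 * d : ℕ) : ℝ) := by
        rw [Nat.cast_sub (by omega)]
        have : 4 * d ≤ s := by omega
        have : (4 : ℝ) * d ≤ s := by exact_mod_cast this
        push_cast
        linarith
      have h4 : ε * ((s : ℝ) / 2) = b * q := by
        rw [hsR, hε, hb]
        have : ρ ≠ 0 := by positivity
        field_simp
      nlinarith
    calc 2 * ((s : ℝ) + (d + 1)) ^ (2 * d) * (1 - ε) ^ (s - 2 * d)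
        ≤ 2 * (2 * (s : ℝ)) ^ (2 * d) * Real.exp (-b * q) := by
          have : 0 ≤ 1 - ε := by linarith
          gcongr
      _ = 2 * 2 ^ (2 * d) * ((q : ℝ) ^ ((2 * d + 1) * (2 * d)) * Real.exp (-b * q)) := by
          rw [hs]
          push_cast
          rw [mul_pow, ← pow_mul]
          ring
      _ ≤ 1 := hqexp
  · have : ρ ≠ 0 := by positivity
    field_simp
    exact le_rfl
  · have h1 : 2 * nB d s ≤ K * s ^ (d - 1) := by
      have : 3 * (s + (d + 1)) ≤ 6 * s := by omega
      calc 2 * nB d s ≤ 2 * (d * (3 * (d + 1) * (6 * s) ^ (d - 1)) * 2 ^ (d + 1)) := by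
            rw [nB]
            gcongr
        _ = K * s ^ (d - 1) := by rw [hK, mul_pow]; ring
    have h2 : K * s ^ (d - 1) ≤ q ^ (2 * d * d) := by
      calc K * s ^ (d - 1) ≤ q * s ^ (d - 1) := Nat.mul_le_mul_right _ hqK
        _ = q ^ (1 + (2 * d + 1) * (d - 1)) := by rw [hs, ← pow_mul, pow_add, pow_one]
        _ ≤ q ^ (2 * d * d) := by
            apply Nat.pow_le_pow_right (by omega)
            obtain ⟨e, rfl⟩ := Nat.exists_eq_add_of_le hd
            simp only [Nat.add_sub_cancel_left]
            nlinarith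
    rw [hρ, ← pow_mul]
    exact_mod_cast h1.trans h2

section Cuttings
variable {V : Type} [AddCommGroup V] [Module ℝ V] [FiniteDimensional ℝ V] {d : ℕ}

/-- Iterating `IsLevel.step` from `IsLevel.zero`. -/
lemma exists_levels (hd : 1 ≤ d) (hV : Module.finrank ℝ V = d + 1)
    {β : Fin (d + 1) → V →ₗ[ℝ] ℝ} (hβ : ∀ w, (∀ i, β i w = 0) → w = 0) :
    ∃ (C : ℕ) (ρ : ℝ), 1 < ρ ∧ ∀ (η : Type) [Fintype η] [Nonempty η] (fn : η → V →ₗ[ℝ] ℝ),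
      ∃ Ξ : ℕ → Finset (Set V), ∀ i, IsLevel fn d C ρ i (Ξ i) ∧ ∀ Δ ∈ Ξ i,
        ∃ G ⊆ Ξ (i + 1), G.card ≤ C ∧ Δ = ⋃₀ (G : Set (Set V)) := by
  obtain ⟨s, ρ, ε, h1, h2, h3, h4, h5, h6, h7⟩ := exists_constants d hd
  set C := 8 * nF d s * s ^ d + nF d s + 3 ^ (d + 1) with hC
  refine ⟨C, ρ, h2, ?_⟩
  intro η _ _ fn
  have hstep : ∀ i (Ξ : Finset (Set V)), IsLevel fn d C ρ i Ξ → ∃ Ξ', IsLevel fn d C ρ (i + 1) Ξ' ∧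
      ∀ Δ ∈ Ξ, ∃ G ⊆ Ξ', G.card ≤ C ∧ Δ = ⋃₀ (G : Set (Set V)) := fun i Ξ h =>
    h.step fn hd hV h1 h3 h4 h2 h5 h6 h7 (by rw [hC, add_assoc]; exact Nat.le_add_right _ _)
      (by rw [hC, add_right_comm]; exact Nat.le_add_left _ _)
  choose next hnext using hstep
  obtain ⟨Ξ0, hΞ0⟩ := IsLevel.zero fn hβ (C := C) (Nat.le_add_left _ _) ρ
  let seq : ∀ i, {Ξ : Finset (Set V) // IsLevel fn d C ρ i Ξ} := fun i =>
    Nat.rec ⟨Ξ0, hΞ0⟩ (fun i Ξ => ⟨next i Ξ.1 Ξ.2, (hnext i Ξ.1 Ξ.2).1⟩) i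
  exact ⟨fun i => (seq i).1, fun i => ⟨(seq i).2, (hnext i (seq i).1 (seq i).2).2⟩⟩

end Cuttings

/-- The affine chart `x ↦ (x, 1)`, which identifies `ℝ^d` with a hyperplane of `ℝ^(d + 1)` missing
the origin. -/
def lift1 {d : ℕ} (x : Fin d → ℝ) : Fin (d + 1) → ℝ := Fin.snoc x 1

lemma lift1_combo {d : ℕ} (x y : Fin d → ℝ) {a b : ℝ} (hab : a + b = 1) :
    lift1 (a • x + b • y) = a • lift1 x + b • lift1 y := by
  funext i
  refine Fin.lastCases ?_ (fun j => ?_) i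
  · simp [lift1, hab]
  · simp [lift1]

lemma IsCone.convex_preimage {d : ℕ} {Δ : Set (Fin (d + 1) → ℝ)} (h : IsCone d Δ) :
    Convex ℝ (lift1 ⁻¹' Δ) := by
  rw [convex_iff_forall_pos]
  intro x hx y hy a b ha hb hab
  change lift1 (a • x + b • y) ∈ Δ
  rw [lift1_combo x y hab]
  exact h.add_mem (h.smul_mem hx ha) (h.smul_mem hy hb)

/-- A hyperplane `a · x = b` is the trace, in the affine chart, of the kernel of the functional
`(a, -b)`. -/
lemma IsHyperplane.exists_functional {d : ℕ} {h : Set (Fin d → ℝ)} (hh : IsHyperplane h) :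
    ∃ g : (Fin (d + 1) → ℝ) →ₗ[ℝ] ℝ, ∀ x, x ∈ h ↔ g (lift1 x) = 0 := by
  obtain ⟨a, b, -, rfl⟩ := hh
  refine ⟨∑ i, (Fin.snoc a (-b) : Fin (d + 1) → ℝ) i • LinearMap.proj i, fun x => ?_⟩
  rw [LinearMap.sum_apply, Fin.sum_univ_castSucc]
  simp only [lift1, LinearMap.smul_apply, LinearMap.proj_apply, Fin.snoc_castSucc, Fin.snoc_last,
    smul_eq_mul, mul_one, Set.mem_ofPred_eq]
  rw [← sub_eq_add_neg, sub_eq_zero]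

/-- **Hierarchical Cutting Lemma (existence part).** -/
theorem hierarchical_cutting_lemma (d : ℕ) (hd : 1 ≤ d) :
    ∃ (C : ℕ) (ρ : ℝ), 1 < ρ ∧
      ∀ H : Finset (Set (Fin d → ℝ)),
        1 ≤ H.card → (∀ h ∈ H, IsHyperplane h) →
        ∀ r : ℝ, 1 ≤ r → r ≤ (H.card : ℝ) →
        ∃ Ξ : ℕ → Finset (Set (Fin d → ℝ)),
          ∀ i : ℕ, 1 ≤ i → i ≤ ⌈Real.logb ρ r⌉₊ →
            ((Ξ i).card : ℝ) ≤ (C : ℝ) * ρ ^ (i * d) ∧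
            (∀ Δ ∈ Ξ i, Convex ℝ Δ) ∧
            (∀ Δ₁ ∈ Ξ i, ∀ Δ₂ ∈ Ξ i, Δ₁ ≠ Δ₂ → Disjoint Δ₁ Δ₂) ∧
            ⋃₀ ((Ξ i : Set (Set (Fin d → ℝ)))) = Set.univ ∧
            (∀ Δ ∈ Ξ i, ((H.filter fun h => Crosses h Δ).card : ℝ) ≤ (H.card : ℝ) / ρ ^ i) ∧
            (i < ⌈Real.logb ρ r⌉₊ → ∀ Δ ∈ Ξ i,
              ∃ G : Finset (Set (Fin d → ℝ)), G ⊆ Ξ (i + 1) ∧ G.card ≤ C ∧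
                Δ = ⋃₀ (G : Set (Set (Fin d → ℝ)))) := by
  obtain ⟨C, ρ, hρ, hlev⟩ := exists_levels (V := Fin (d + 1) → ℝ) hd (by simp)
    (β := fun i => LinearMap.proj i) (fun w hw => funext hw)
  refine ⟨C, ρ, hρ, fun H hH hHyp r _ _ => ?_⟩
  have : Nonempty H := by
    obtain ⟨h, hh⟩ := Finset.card_pos.1 hH
    exact ⟨⟨h, hh⟩⟩
  choose fn hfn using fun h : H => (hHyp h.1 h.2).exists_functional
  obtain ⟨Ξ, hΞ⟩ := hlev H fn
  refine ⟨fun i => (Ξ i).image fun Δ => lift1 ⁻¹' Δ, fun i _ _ => ?_⟩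
  obtain ⟨hL, hG⟩ := hΞ i
  refine ⟨?_, ?_, ?_, ?_, ?_, fun _ => ?_⟩
  · refine le_trans ?_ hL.card_le
    exact_mod_cast Finset.card_image_le
  · intro Δ hΔ
    obtain ⟨Δ, hΔΞ, rfl⟩ := Finset.mem_image.1 hΔ
    exact (hL.cone Δ hΔΞ).convex_preimage
  · intro Δ₁ h1 Δ₂ h2 hne
    obtain ⟨Δ₁, h1', rfl⟩ := Finset.mem_image.1 h1
    obtain ⟨Δ₂, h2', rfl⟩ := Finset.mem_image.1 h2
    exact (hL.disj Δ₁ h1' Δ₂ h2' fun h => hne (by rw [h])).preimage _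
  · rw [Set.eq_univ_iff_forall]
    intro x
    have hx : lift1 x ∈ ⋃₀ (Ξ i : Set (Set (Fin (d + 1) → ℝ))) := by rw [hL.cover]; trivial
    obtain ⟨Δ, hΔ, hxΔ⟩ := hx
    exact ⟨_, Finset.mem_coe.2 (Finset.mem_image_of_mem _ hΔ), hxΔ⟩
  · intro Δ hΔ
    obtain ⟨Δ, hΔΞ, rfl⟩ := Finset.mem_image.1 hΔ
    have h1 := hL.cut Δ hΔΞ
    rw [Fintype.card_coe] at h1
    refine le_trans ?_ h1
    have : (H.filter fun h => Crosses h (lift1 ⁻¹' Δ)) ⊆ (cutters fn Δ).image Subtype.val := by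
      intro h hh
      obtain ⟨hh, ⟨x, hx, hxΔ⟩, hns⟩ := Finset.mem_filter.1 hh
      obtain ⟨y, hyΔ, hy⟩ := Set.not_subset.1 hns
      refine Finset.mem_image.2 ⟨⟨h, hh⟩, Finset.mem_filter.2 ⟨Finset.mem_univ _, ?_⟩, rfl⟩
      exact ⟨⟨lift1 x, hxΔ, (hfn ⟨h, hh⟩ x).1 hx⟩, lift1 y, hyΔ, fun h0 =>
        hy ((hfn ⟨h, hh⟩ y).2 h0)⟩
    exact_mod_cast (Finset.card_le_card this).trans Finset.card_image_le
  · intro Δ hΔ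
    obtain ⟨Δ, hΔΞ, rfl⟩ := Finset.mem_image.1 hΔ
    obtain ⟨G, hGs, hGc, hGu⟩ := hG Δ hΔΞ
    refine ⟨G.image fun Δ => lift1 ⁻¹' Δ, Finset.image_subset_image hGs,
      Finset.card_image_le.trans hGc, ?_⟩
    conv_lhs => rw [hGu]
    ext x
    simp
end

section
/- (Basic Search Lemma, combinatorial core.) Let Π be a finite nonempty set, let r ≥ 2 be an integer, let γ_1, …, γ_r be subsets of Π whose union is Π, and let x ∈ Π. Then: (i) for every nonempty subset A of Π there exists an index k ∈ {1,…,r} with |A ∩ γ_k| ≥ |A|/r; and (ii) if A_0, A_1, …, A_t are subsets of Π and k_1, …, k_t are indices such that A_0 = Π and, for every i ∈ {1,…,t}, |A_{i-1} ∩ γ_{k_i}| ≥ |A_{i-1}|/r, x ∉ γ_{k_i}, and A_i = A_{i-1} \ γ_{k_i}, then t ≤ r·ln|Π|. -/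
/-!
Part (i) is pigeonhole: the sets `A ∩ γ k` cover `A`, so their cardinalities sum to at least `|A|`.

For part (ii), each step removes at least a `1/r` fraction of the active set, so it shrinks by a
factor of at most `1 - 1/r ≤ exp (-1/r)`, while `x` is never removed. Hence
`1 ≤ |A_t| ≤ |Π| exp (-t/r)`, and taking logarithms gives `t ≤ r ln |Π|`.
-/

/-- **Basic Search Lemma (combinatorial core).** -/
theorem basic_search_lemma {α : Type*} [DecidableEq α]
    (Pi : Finset α) (hPi : Pi.Nonempty)
    (r : ℕ) (hr : 2 ≤ r) (γ : Fin r → Finset α)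
    (hcover : (Finset.univ : Finset (Fin r)).biUnion γ = Pi)
    (x : α) (hx : x ∈ Pi) :
    (∀ A : Finset α, A ⊆ Pi → A.Nonempty →
      ∃ k : Fin r, ((A.card : ℝ) / (r : ℝ)) ≤ ((A ∩ γ k).card : ℝ)) ∧
    (∀ (t : ℕ) (A : ℕ → Finset α) (k : ℕ → Fin r),
      A 0 = Pi →
      (∀ i : ℕ, 1 ≤ i → i ≤ t →
        ((A (i - 1)).card : ℝ) / (r : ℝ) ≤ (((A (i - 1)) ∩ γ (k i)).card : ℝ) ∧
        x ∉ γ (k i) ∧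
        A i = (A (i - 1)) \ γ (k i)) →
      (t : ℝ) ≤ (r : ℝ) * Real.log (Pi.card)) := by
  have hr0 : (0 : ℝ) < r := by
    exact_mod_cast (by omega : 0 < r)
  constructor
  · intro A hA _
    by_contra! hlt
    have hcov : A ⊆ Finset.univ.biUnion fun k => A ∩ γ k := by
      intro a ha
      have haPi := hA ha
      rw [← hcover] at haPi
      simpa [ha] using haPi
    have hsum : (A.card : ℝ) ≤ ∑ k : Fin r, ((A ∩ γ k).card : ℝ) := by
      exact_mod_cast (Finset.card_le_card hcov).trans Finset.card_biUnion_le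
    have hne : (Finset.univ : Finset (Fin r)).Nonempty := ⟨⟨0, by omega⟩, Finset.mem_univ _⟩
    have hsum_lt : ∑ k : Fin r, ((A ∩ γ k).card : ℝ) < ∑ _k : Fin r, (A.card : ℝ) / r :=
      Finset.sum_lt_sum_of_nonempty hne fun k _ => hlt k
    have hconst : ∑ _k : Fin r, (A.card : ℝ) / r = A.card := by
      simp [mul_div_cancel₀, hr0.ne']
    linarith
  · intro t A k h0 hstep
    have hinv : ∀ j ≤ t, x ∈ A j ∧ ((A j).card : ℝ) ≤ Pi.card * Real.exp (-(j / r)) := by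
      intro j
      induction j with
      | zero => intro _; simp [h0, hx]
      | succ j ih =>
        intro hj
        obtain ⟨hxj, hcard⟩ := ih (by omega)
        obtain ⟨hfrac, hxk, hA⟩ := hstep (j + 1) (by omega) hj
        rw [Nat.add_sub_cancel] at hfrac hA
        refine ⟨by rw [hA]; exact Finset.mem_sdiff.2 ⟨hxj, hxk⟩, ?_⟩
        have hsplit : ((A (j + 1)).card : ℝ) + ((A j ∩ γ (k (j + 1))).card : ℝ)
            = (A j).card := by
          rw [hA]
          exact_mod_cast Finset.card_sdiff_add_card_inter _ _
        have hexp : 1 - 1 / (r : ℝ) ≤ Real.exp (-(1 / r)) := Real.one_sub_le_exp_neg _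
        calc ((A (j + 1)).card : ℝ) ≤ (A j).card * (1 - 1 / r) := by
              rw [mul_sub, mul_one, mul_one_div]; linarith
          _ ≤ (A j).card * Real.exp (-(1 / r)) := by gcongr
          _ ≤ Pi.card * Real.exp (-(j / r)) * Real.exp (-(1 / r)) := by gcongr
          _ = Pi.card * Real.exp (-((j + 1 : ℕ) / r)) := by
              rw [mul_assoc, ← Real.exp_add]
              congr 2
              push_cast
              ring
    obtain ⟨hxt, hcard⟩ := hinv t le_rfl
    have hone : (1 : ℝ) ≤ (A t).card := by
      exact_mod_cast Finset.card_pos.2 ⟨x, hxt⟩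
    have hPi0 : (0 : ℝ) < Pi.card := by exact_mod_cast hPi.card_pos
    have hlog := Real.log_le_log one_pos (hone.trans hcard)
    rw [Real.log_one, Real.log_mul hPi0.ne' (Real.exp_ne_zero _), Real.log_exp] at hlog
    have hdiv : (t : ℝ) / r ≤ Real.log Pi.card := by linarith
    rwa [div_le_iff₀' hr0] at hdiv
end

section
/- (Search Lemma, second version — combinatorial core.) Let Π be a finite nonempty set, let b ≥ 1 be an integer, and let G be a finite directed acyclic graph in which every node has at most b out-neighbors. Suppose each node v of G is assigned a subset γ_v of Π such that (i) for every node v that is not a sink, γ_v ⊆ ⋃_{v' an out-neighbor of v} γ_{v'}, and (ii) some node s has γ_s = Π. Then there exists a node v of G such that |γ_v| ≥ |Π|/(b+1), |Π \ γ_v| ≤ b·|Π|/(b+1), and moreover, if v is not a sink, then |γ_v| ≤ b·|Π|/(b+1). -/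
/-!
Call a node heavy if `γ v` contains more than the fraction `b / (b + 1)` of `Pi`. The node `s` is
heavy, and since the graph is finite and acyclic there is a heavy node `v` none of whose
out-neighbors is heavy (`exists_heavy_with_no_heavy_succ`). If `v` is a sink, it is the required
node, because `b ≥ 1`. Otherwise the at most `b` sets attached to the out-neighbors cover `γ v`, so
one of them has at least the fraction `1 / (b + 1)` of `Pi` (`exists_large_succ`); as that
out-neighbor is not heavy, it is the required node.
-/

/-- In a finite acyclic graph, a property that holds somewhere holds at a node none of whose
out-neighbors has it. -/
lemma exists_heavy_with_no_heavy_succ {V : Type*} [Finite V] (adj : V → V → Prop)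
    (hacyclic : ∀ v : V, ¬ Relation.TransGen adj v v) (P : V → Prop) (s : V) (hs : P s) :
    ∃ v, P v ∧ ∀ v', adj v v' → ¬ P v' := by
  let r : V → V → Prop := fun x y => Relation.TransGen adj y x
  have : IsTrans V r := ⟨fun _ _ _ hab hbc => Relation.TransGen.trans hbc hab⟩
  have : Std.Irrefl r := ⟨hacyclic⟩
  have hwf : WellFounded r := Finite.wellFounded_of_trans_of_irrefl r
  obtain ⟨v, hv, hmin⟩ := hwf.has_min {v | P v} ⟨s, hs⟩
  exact ⟨v, hv, fun v' hadj hP => hmin v' hP (Relation.TransGen.single hadj)⟩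

/-- Pigeonhole: if at most `b` out-neighbors cover `γ v` and `|γ v| > b n / (b + 1)`, then some
out-neighbor has at least `n / (b + 1)` elements. -/
lemma exists_large_succ {α V : Type*} [DecidableEq α] [Fintype V] (b n : ℕ)
    (adj : V → V → Prop) (γ : V → Finset α) (v : V)
    (hdeg : {v' : V | adj v v'}.ncard ≤ b)
    (hcover : ∀ y ∈ γ v, ∃ v', adj v v' ∧ y ∈ γ v')
    (hheavy : b * n < (b + 1) * (γ v).card) :
    ∃ v', adj v v' ∧ n ≤ (b + 1) * (γ v').card := by
  classical
  by_contra! hsmall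
  let N : Finset V := Finset.univ.filter (adj v)
  have hN : N.card ≤ b := by
    rw [← Set.ncard_coe_finset]
    simpa [N] using hdeg
  have hsub : γ v ⊆ N.biUnion γ := fun y hy => by
    simpa [N] using hcover y hy
  have : (b + 1) * (γ v).card ≤ b * n := calc
    (b + 1) * (γ v).card ≤ (b + 1) * ∑ w ∈ N, (γ w).card :=
      Nat.mul_le_mul_left _ ((Finset.card_le_card hsub).trans Finset.card_biUnion_le)
    _ = ∑ w ∈ N, (b + 1) * (γ w).card := Finset.mul_sum ..
    _ ≤ N.card * n := by
      simpa using Finset.sum_le_card_nsmul N _ n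
        (fun w hw => (hsmall w (by simpa [N] using hw)).le)
    _ ≤ b * n := Nat.mul_le_mul_right _ hN
  omega

/-- **Search Lemma, second version (combinatorial core).** -/
theorem search_lemma_second_version {α V : Type*} [DecidableEq α] [Fintype V]
    (Pi : Finset α) (hPi : Pi.Nonempty)
    (b : ℕ) (hb : 1 ≤ b)
    (adj : V → V → Prop)
    (hacyclic : ∀ v : V, ¬ Relation.TransGen adj v v)
    (hdeg : ∀ v : V, {v' : V | adj v v'}.ncard ≤ b)
    (γ : V → Finset α)
    (hsub : ∀ v : V, γ v ⊆ Pi)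
    (hcover : ∀ v : V, (∃ v', adj v v') → ∀ y ∈ γ v, ∃ v', adj v v' ∧ y ∈ γ v')
    (s : V) (hs : γ s = Pi) :
    ∃ v : V,
      (Pi.card : ℝ) / ((b : ℝ) + 1) ≤ ((γ v).card : ℝ) ∧
      ((Pi \ γ v).card : ℝ) ≤ (b : ℝ) * (Pi.card : ℝ) / ((b : ℝ) + 1) ∧
      ((∃ v', adj v v') → ((γ v).card : ℝ) ≤ (b : ℝ) * (Pi.card : ℝ) / ((b : ℝ) + 1)) := by
  have hn : 0 < Pi.card := hPi.card_pos
  -- The claim with denominators cleared; the bound on the complement follows from the first one.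
  have key : ∃ v : V, Pi.card ≤ (b + 1) * (γ v).card ∧
      ((∃ v', adj v v') → (b + 1) * (γ v).card ≤ b * Pi.card) := by
    obtain ⟨v, hv, hmin⟩ := exists_heavy_with_no_heavy_succ adj hacyclic
      (fun v => b * Pi.card < (b + 1) * (γ v).card) s (by rw [hs]; nlinarith)
    by_cases hsink : ∃ v', adj v v'
    · obtain ⟨v', hadj, hlarge⟩ :=
        exists_large_succ b Pi.card adj γ v (hdeg v) (hcover v hsink) hv
      exact ⟨v', hlarge, fun _ => not_lt.mp (hmin v' hadj)⟩
    · exact ⟨v, by nlinarith, fun h => absurd h hsink⟩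
  obtain ⟨v, hlow, hup⟩ := key
  have hb' : (0 : ℝ) < (b : ℝ) + 1 := by positivity
  have hlow' : (Pi.card : ℝ) ≤ ((b : ℝ) + 1) * ((γ v).card : ℝ) := by exact_mod_cast hlow
  have hcard : ((Pi \ γ v).card : ℝ) + ((γ v).card : ℝ) = (Pi.card : ℝ) := by
    exact_mod_cast Finset.card_sdiff_add_card_eq_card (hsub v)
  refine ⟨v, ?_, ?_, fun h => ?_⟩
  · rw [div_le_iff₀ hb']
    linarith
  · rw [le_div_iff₀ hb', ← hcard]
    rw [← hcard] at hlow'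
    linarith
  · have hup' : ((b : ℝ) + 1) * ((γ v).card : ℝ) ≤ (b : ℝ) * (Pi.card : ℝ) := by
      exact_mod_cast hup h
    rw [le_div_iff₀ hb']
    linarith
end

section
/- (Milnor–Thom sign-pattern bound, in the form used by the paper.) For every positive integer D there exists a constant C (depending only on D) such that: for all positive integers N and m and all real polynomials p_1, …, p_m in N variables, each of total degree at most D, the set of realized sign vectors {(sgn p_1(x), sgn p_2(x), …, sgn p_m(x)) : x ∈ ℝ^N} ⊆ {-1,0,1}^m has cardinality at most (C·m)^N. -/
/-!
The bound is proved by counting critical points.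

Choose a point `y s` for every realized sign vector `s`. For small `δ > 0` the `2 m` polynomials
`p j - δ`, `p j + δ` vanish at none of these finitely many points, and two distinct points are
separated by the strict sign of one of them. Let `Q` be the product of the `2 m` polynomials and
`d = 2 m D`, so `deg Q ≤ d`. For small `ε > 0` the polynomial `Φ = Q ^ 2 - ε ∑ i, X i ^ (2 d + 2)`
is positive at every chosen point, and nonpositive both far away and on the zero set of
`Q`. Hence on each cell, i.e. each closed set cut out by the weak signs at a chosen point, `Φ` has a
maximum, which lies in the open cell and is therefore a critical point of `Φ`
(`exists_critical_point`). Distinct cells give distinct critical points.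

A critical point satisfies `x i ^ (2 d + 1) = g i (x)` with `deg (g i) ≤ 2 d`. Modulo these
relations every polynomial is a combination of monomials with all exponents at most `2 d`, whereas
polynomials realize every function on a finite set; so there are at most `(2 d + 1) ^ N` critical
points (`card_le_of_pow_eq`). No perturbation to nondegenerate critical points and no Bézout theorem
is needed, because the leading terms of the critical equations are pure powers.
-/

namespace MilnorThom

open MvPolynomial

/-! ### Finite systems whose leading terms are pure powers -/

/-- Every function on a finite set of points is the restriction of a polynomial. -/
lemma exists_eval_eq {N : ℕ} (S : Finset (Fin N → ℝ)) (f : S → ℝ) :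
    ∃ P : MvPolynomial (Fin N) ℝ, ∀ x : S, eval x.1 P = f x := by
  classical
  have key : ∀ s t : S, ∃ L : MvPolynomial (Fin N) ℝ,
      s ≠ t → eval s.1 L = 1 ∧ eval t.1 L = 0 := by
    intro s t
    by_cases h : s = t
    · exact ⟨0, fun h' => absurd h h'⟩
    · obtain ⟨i, hi⟩ := Function.ne_iff.mp (fun h' => h (Subtype.ext h'))
      refine ⟨C ((s.1 i - t.1 i)⁻¹) * (X i - C (t.1 i)), fun _ => ⟨?_, ?_⟩⟩
      · have : s.1 i - t.1 i ≠ 0 := sub_ne_zero.mpr hi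
        simp [this]
      · simp
  choose L hL using key
  refine ⟨∑ s : S, C (f s) * ∏ t ∈ Finset.univ.erase s, L s t, fun x => ?_⟩
  simp only [map_sum, map_mul, map_prod, eval_C]
  rw [Finset.sum_eq_single x]
  · rw [Finset.prod_eq_one, mul_one]
    intro t ht
    exact (hL x t (Finset.ne_of_mem_erase ht).symm).1
  · intro s _ hs
    rw [Finset.prod_eq_zero (i := x), mul_zero]
    · simp [Ne.symm hs]
    · exact (hL s x hs).2
  · simp

/-- A finite set on which each `X i ^ M` agrees with a polynomial of degree less than `M` has at
most `M ^ N` points: the monomials with all exponents less than `M` span the functions on it. -/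
lemma card_le_of_pow_eq {N M : ℕ} (S : Finset (Fin N → ℝ)) (g : Fin N → MvPolynomial (Fin N) ℝ)
    (hg : ∀ i, (g i).totalDegree < M) (hS : ∀ x ∈ S, ∀ i, x i ^ M = eval x (g i)) :
    S.card ≤ M ^ N := by
  classical
  let b : (Fin N → Fin M) → (S → ℝ) := fun a x => ∏ i, x.1 i ^ (a i : ℕ)
  let V := Submodule.span ℝ (Set.range b)
  have of_monomials : ∀ n : ℕ, (∀ a : Fin N →₀ ℕ, a.degree < n →
      (fun x : S => eval x.1 (monomial a (1 : ℝ))) ∈ V) →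
      ∀ P : MvPolynomial (Fin N) ℝ, P.totalDegree < n → (fun x : S => eval x.1 P) ∈ V := by
    intro n hn P hP
    have : (fun x : S => eval x.1 P)
        = ∑ a ∈ P.support, P.coeff a • (fun x : S => eval x.1 (monomial a (1 : ℝ))) := by
      funext x
      rw [eval_eq']
      simp [eval_monomial]
    rw [this]
    refine Submodule.sum_mem _ fun a ha => Submodule.smul_mem _ _ (hn a ?_)
    exact lt_of_le_of_lt (le_totalDegree ha) hP
  have mono : ∀ n : ℕ, ∀ a : Fin N →₀ ℕ, a.degree < n →
      (fun x : S => eval x.1 (monomial a (1 : ℝ))) ∈ V := by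
    intro n
    induction n with
    | zero => intro a ha; omega
    | succ n ih =>
      intro a ha
      by_cases hlt : ∀ i, a i < M
      · refine Submodule.subset_span ⟨fun i => ⟨a i, hlt i⟩, ?_⟩
        funext x
        simp [b, eval_monomial, Finsupp.prod_fintype]
      · push Not at hlt
        obtain ⟨i, hi⟩ := hlt
        -- Replace the factor `X i ^ M` of the monomial by `g i`, which lowers the degree.
        obtain ⟨c, rfl⟩ : ∃ c, a = c + Finsupp.single i M :=
          ⟨a - Finsupp.single i M, (tsub_add_cancel_of_le (by simpa using hi)).symm⟩
        have hdeg : (monomial c (1 : ℝ) * g i).totalDegree < n := by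
          have h1 := totalDegree_mul (monomial c (1 : ℝ)) (g i)
          have h2 : (monomial c (1 : ℝ)).totalDegree ≤ c.degree := totalDegree_monomial_le c 1
          have h3 := hg i
          simp only [map_add, Finsupp.degree_single] at ha
          omega
        have := of_monomials n ih _ hdeg
        convert this using 1
        funext x
        rw [map_mul, ← hS x.1 x.2 i]
        have : (monomial (c + Finsupp.single i M) (1 : ℝ))
            = monomial c 1 * X i ^ M := by
          rw [X_pow_eq_monomial, monomial_mul, one_mul]
        rw [this]
        simp
  have htop : V = ⊤ := by
    rw [eq_top_iff]
    intro f _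
    obtain ⟨P, hP⟩ := exists_eval_eq S f
    have := of_monomials (P.totalDegree + 1) (mono _) P (Nat.lt_succ_self _)
    rwa [show (fun x : S => eval x.1 P) = f from funext hP] at this
  have h := finrank_range_le_card (R := ℝ) b
  rw [Set.finrank, show Submodule.span ℝ (Set.range b) = ⊤ from htop, finrank_top] at h
  simpa using h

/-! ### Partial derivatives and growth -/

lemma hasDerivAt_eval_update {N : ℕ} (F : MvPolynomial (Fin N) ℝ) (x : Fin N → ℝ) (i : Fin N) :
    HasDerivAt (fun t => eval (Function.update x i t) F) (eval x (pderiv i F)) (x i) := by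
  induction F using MvPolynomial.induction_on with
  | C a => simpa using hasDerivAt_const (x i) a
  | add p q hp hq => simp only [map_add]; exact hp.add hq
  | mul_X p j hp =>
    have hj : HasDerivAt (fun t => Function.update x i t j)
        (eval x (pderiv i (X j : MvPolynomial (Fin N) ℝ))) (x i) := by
      by_cases h : j = i
      · subst h; simpa using hasDerivAt_id' (x j)
      · simpa [Function.update_of_ne h, pderiv_X_of_ne h] using hasDerivAt_const (x i) (x j)
    have := hp.mul hj
    simp only [Function.update_eq_self] at this
    rw [pderiv_mul]
    simp only [map_add, map_mul, eval_X]
    exact this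

lemma totalDegree_pderiv_le {N : ℕ} (F : MvPolynomial (Fin N) ℝ) (i : Fin N) :
    (pderiv i F).totalDegree ≤ F.totalDegree := by
  refine Finset.sup_le fun a ha => ?_
  rw [mem_support_iff, coeff_pderiv] at ha
  have h := le_totalDegree (mem_support_iff.mpr (left_ne_zero_of_mul ha))
  change (a + Finsupp.single i 1).degree ≤ _ at h
  change a.degree ≤ _
  rw [map_add] at h
  omega

lemma exists_growth_bound {N : ℕ} (F : MvPolynomial (Fin N) ℝ) :
    ∃ A : ℝ, 0 < A ∧ ∀ (x : Fin N → ℝ) (r : ℝ), 1 ≤ r → (∀ i, |x i| ≤ r) →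
      |eval x F| ≤ A * r ^ F.totalDegree := by
  refine ⟨1 + ∑ a ∈ F.support, |F.coeff a|, by positivity, fun x r hr hx => ?_⟩
  have h : |eval x F| ≤ ∑ a ∈ F.support, |F.coeff a| * r ^ F.totalDegree := by
    rw [eval_eq']
    refine (Finset.abs_sum_le_sum_abs _ _).trans (Finset.sum_le_sum fun a ha => ?_)
    rw [abs_mul, Finset.abs_prod]
    gcongr
    calc ∏ i, |x i ^ a i| ≤ ∏ i, r ^ a i := by
          refine Finset.prod_le_prod (fun _ _ => abs_nonneg _) fun i _ => ?_
          rw [abs_pow]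
          exact pow_le_pow_left₀ (abs_nonneg _) (hx i) _
      _ = r ^ (∑ i, a i) := Finset.prod_pow_eq_pow_sum _ _ _
      _ ≤ r ^ F.totalDegree := by
          refine pow_le_pow_right₀ hr ?_
          have := le_totalDegree ha
          rwa [Finsupp.sum_fintype _ _ (fun _ => rfl)] at this
  rw [← Finset.sum_mul] at h
  nlinarith [pow_nonneg (zero_le_one.trans hr) F.totalDegree]

/-- The polynomial `F - ε ∑ i, X i ^ (2 * d + 2)`, the objective of the critical point argument. -/
noncomputable def penalized {N : ℕ} (F : MvPolynomial (Fin N) ℝ) (d : ℕ) (ε : ℝ) :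
    MvPolynomial (Fin N) ℝ :=
  F - C ε * ∑ i, X i ^ (2 * d + 2)

lemma eval_penalized {N : ℕ} (F : MvPolynomial (Fin N) ℝ) (d : ℕ) (ε : ℝ) (x : Fin N → ℝ) :
    eval x (penalized F d ε) = eval x F - ε * ∑ i, x i ^ (2 * d + 2) := by
  simp [penalized]

lemma exists_penalized_nonpos {N : ℕ} (F : MvPolynomial (Fin N) ℝ) (d : ℕ)
    (hF : F.totalDegree ≤ 2 * d) {ε : ℝ} (hε : 0 < ε) :
    ∃ R : ℝ, ∀ x : Fin N → ℝ, R < ‖x‖ → eval x (penalized F d ε) ≤ 0 := by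
  obtain ⟨A, hA, hb⟩ := exists_growth_bound F
  refine ⟨1 + A / ε, fun x hx => ?_⟩
  have hAε : 0 < A / ε := div_pos hA hε
  have hr1 : 1 ≤ ‖x‖ := by linarith
  obtain ⟨j, hj⟩ : ∃ j, ‖x‖ ≤ |x j| := by
    by_contra! h
    exact lt_irrefl _ ((pi_norm_lt_iff (by linarith)).mpr h)
  have hj' : |x j| = ‖x‖ := le_antisymm (norm_le_pi_norm x j) hj
  have h1 : |eval x F| ≤ A * ‖x‖ ^ (2 * d) :=
    (hb x ‖x‖ hr1 (fun i => norm_le_pi_norm x i)).trans (by gcongr)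
  have hev : ∀ i, 0 ≤ x i ^ (2 * d + 2) := fun i => Even.pow_nonneg ⟨d + 1, by ring⟩ _
  have h2 : ‖x‖ ^ (2 * d + 2) ≤ ∑ i, x i ^ (2 * d + 2) := by
    have : ‖x‖ ^ (2 * d + 2) = x j ^ (2 * d + 2) := by
      rw [← hj', Even.pow_abs ⟨d + 1, by ring⟩]
    rw [this]
    exact Finset.single_le_sum (f := fun i => x i ^ (2 * d + 2)) (fun i _ => hev i)
      (Finset.mem_univ j)
  have h3 : A ≤ ε * ‖x‖ ^ 2 := by
    have : A / ε ≤ ‖x‖ ^ 2 := by nlinarith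
    rwa [div_le_iff₀' hε] at this
  rw [eval_penalized]
  have h4 : A * ‖x‖ ^ (2 * d) ≤ ε * ‖x‖ ^ (2 * d + 2) := by
    rw [pow_add, mul_left_comm, mul_comm A]
    gcongr
  have h5 := mul_le_mul_of_nonneg_left h2 hε.le
  linarith [le_abs_self (eval x F)]

/-! ### Critical points in cells -/

/-- If the penalized square of `∏ j, q j` is positive at `y`, it has a critical point at which
every `q j` has the same strict sign as at `y`. -/
lemma exists_critical_point {N : ℕ} {ι : Type*} [Fintype ι] (q : ι → MvPolynomial (Fin N) ℝ)
    (d : ℕ) (hd : (∏ j, q j).totalDegree ≤ d) {ε : ℝ} (hε : 0 < ε) (y : Fin N → ℝ)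
    (hy : 0 < eval y (penalized ((∏ j, q j) ^ 2) d ε)) :
    ∃ z : Fin N → ℝ, (∀ j, 0 < eval y (q j) * eval z (q j)) ∧
      ∀ i, eval z (pderiv i (penalized ((∏ j, q j) ^ 2) d ε)) = 0 := by
  classical
  set Φ := penalized ((∏ j, q j) ^ 2) d ε with hΦ
  have hcont : ∀ P : MvPolynomial (Fin N) ℝ, Continuous fun x => eval x P :=
    fun P => MvPolynomial.continuous_eval P
  have hdeg : ((∏ j, q j) ^ 2).totalDegree ≤ 2 * d :=
    (totalDegree_pow _ _).trans (by omega)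
  obtain ⟨R, hR⟩ := exists_penalized_nonpos _ d hdeg hε
  have hnz : ∀ x, 0 < eval x Φ → ∀ j, eval x (q j) ≠ 0 := by
    intro x hx j hj
    have h0 : eval x (∏ j, q j) = 0 := by
      rw [map_prod]; exact Finset.prod_eq_zero (Finset.mem_univ j) hj
    have : 0 ≤ ∑ i, x i ^ (2 * d + 2) :=
      Finset.sum_nonneg fun i _ => Even.pow_nonneg ⟨d + 1, by ring⟩ _
    rw [hΦ, eval_penalized, map_pow, h0] at hx
    nlinarith
  let W : Set (Fin N → ℝ) := {x | ∀ j, 0 ≤ eval y (q j) * eval x (q j)}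
  have hWc : IsClosed W := by
    simp only [W, Set.ofPred_forall]
    exact isClosed_iInter fun j => isClosed_le continuous_const (continuous_const.mul (hcont _))
  have hyB : y ∈ W ∩ Metric.closedBall 0 R := by
    refine ⟨fun j => mul_self_nonneg _, ?_⟩
    rw [mem_closedBall_zero_iff]
    by_contra! h
    exact absurd (hR y h) (not_le.mpr hy)
  obtain ⟨z, hz, hmax⟩ := ((isCompact_closedBall (0 : Fin N → ℝ) R).inter_left hWc).exists_isMaxOn
    ⟨y, hyB⟩ (hcont Φ).continuousOn
  have hzpos : 0 < eval z Φ := hy.trans_le (hmax hyB)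
  have hstrict : ∀ j, 0 < eval y (q j) * eval z (q j) := fun j =>
    lt_of_le_of_ne (hz.1 j) (mul_ne_zero (hnz y hy j) (hnz z hzpos j)).symm
  have hloc : IsLocalMax (fun x => eval x Φ) z := by
    have hev : ∀ᶠ x in nhds z, ∀ j, 0 < eval y (q j) * eval x (q j) := by
      rw [Filter.eventually_all]
      exact fun j => (continuous_const.mul (hcont _)).continuousAt.eventually
        (lt_mem_nhds (hstrict j))
    filter_upwards [hev] with x hx
    by_cases hxR : R < ‖x‖
    · exact (hR x hxR).trans hzpos.le
    · exact hmax ⟨fun j => (hx j).le, by rw [mem_closedBall_zero_iff]; exact not_lt.mp hxR⟩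
  refine ⟨z, hstrict, fun i => ?_⟩
  have hline : IsLocalMax (fun t => eval (Function.update z i t) Φ) (z i) := by
    have hc : ContinuousAt (fun t => Function.update z i t) (z i) :=
      (continuous_const.update i continuous_id).continuousAt
    have := hc.tendsto
    rw [Function.update_eq_self] at this
    have h2 := this.eventually hloc
    simpa [IsLocalMax, IsMaxFilter] using h2
  exact hline.hasDerivAt_eq_zero (hasDerivAt_eval_update Φ z i)

lemma exists_pos_mul_lt {κ : Type*} [Finite κ] (a b : κ → ℝ) (hb : ∀ k, 0 < b k) :
    ∃ ε : ℝ, 0 < ε ∧ ∀ k, ε * a k < b k := by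
  have h : ∀ᶠ ε in nhdsWithin (0 : ℝ) (Set.Ioi 0), ∀ k, ε * a k < b k := by
    rw [Filter.eventually_all]
    intro k
    have : Filter.Tendsto (fun ε : ℝ => ε * a k) (nhds 0) (nhds (0 * a k)) :=
      Filter.tendsto_id.mul_const _
    rw [zero_mul] at this
    exact (this.eventually (gt_mem_nhds (hb k))).filter_mono nhdsWithin_le_nhds
  obtain ⟨ε, h1, h2⟩ := (h.and self_mem_nhdsWithin).exists
  exact ⟨ε, h2, h1⟩

/-- Finitely many points at which no `q j` vanishes, pairwise separated by the strict sign of some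
`q j`, number at most `(2 d + 1) ^ N`, where `d` bounds the degree of the product. -/
lemma card_le_of_separated {N : ℕ} {ι κ : Type*} [Fintype ι] [Fintype κ]
    (q : ι → MvPolynomial (Fin N) ℝ) (d : ℕ) (hd : (∏ j, q j).totalDegree ≤ d)
    (y : κ → Fin N → ℝ) (hy : ∀ k j, eval (y k) (q j) ≠ 0)
    (hsep : ∀ k l, k ≠ l → ∃ j, eval (y k) (q j) * eval (y l) (q j) < 0) :
    Fintype.card κ ≤ (2 * d + 1) ^ N := by
  classical
  obtain ⟨ε, hε, hεy⟩ := exists_pos_mul_lt (fun k => ∑ i, y k i ^ (2 * d + 2))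
    (fun k => eval (y k) ((∏ j, q j) ^ 2)) (fun k => by
      have : eval (y k) (∏ j, q j) ≠ 0 := by
        rw [map_prod]; exact Finset.prod_ne_zero_iff.mpr fun j _ => hy k j
      rw [map_pow]; positivity)
  choose z hz hcrit using fun k => exists_critical_point q d hd hε (y k)
    (by rw [eval_penalized]; linarith [hεy k])
  have hinj : Function.Injective z := by
    intro k l hkl
    by_contra hne
    obtain ⟨j, hj⟩ := hsep k l hne
    have h1 := hz k j
    have h2 := hz l j
    rw [hkl] at h1
    nlinarith [mul_pos h1 h2, sq_nonneg (eval (z l) (q j))]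
  have hdeg : ((∏ j, q j) ^ 2).totalDegree ≤ 2 * d :=
    (totalDegree_pow _ _).trans (by omega)
  have hc : ε * (2 * d + 2) ≠ 0 := by positivity
  have := card_le_of_pow_eq (M := 2 * d + 1) (Finset.univ.image z)
    (fun i => C (ε * (2 * d + 2))⁻¹ * pderiv i ((∏ j, q j) ^ 2))
    (fun i => by
      have h1 := totalDegree_mul (C (ε * (2 * d + 2))⁻¹) (pderiv i ((∏ j, q j) ^ 2))
      have h2 := totalDegree_pderiv_le ((∏ j, q j) ^ 2) i
      rw [totalDegree_C] at h1
      omega)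
    (fun x hx i => by
      obtain ⟨k, -, rfl⟩ := Finset.mem_image.mp hx
      have h := hcrit k i
      have hsum : pderiv i (∑ l, (X l : MvPolynomial (Fin N) ℝ) ^ (2 * d + 2))
          = C (2 * (d : ℝ) + 2) * X i ^ (2 * d + 1) := by
        rw [map_sum, Finset.sum_eq_single i]
        · rw [pderiv_pow, pderiv_X_self]
          simp [← map_ofNat (C : ℝ →+* MvPolynomial (Fin N) ℝ)]
        · intro l _ hl
          rw [pderiv_pow, pderiv_X_of_ne hl, mul_zero]
        · simp
      rw [penalized, map_sub, pderiv_C_mul, hsum] at h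
      simp only [map_sub, map_mul, eval_C, eval_X, map_pow] at h ⊢
      rw [eq_inv_mul_iff_mul_eq₀ hc]
      linarith)
  rwa [Finset.card_image_of_injective _ hinj, Finset.card_univ] at this

/-- Shifting by `± δ` turns a difference of signs into a strict separation, for numbers that are
zero or of absolute value more than `δ`. -/
lemma separated_of_sign_ne {a b δ : ℝ} (hδ : 0 < δ) (ha : a ≠ 0 → δ < |a|) (hb : b ≠ 0 → δ < |b|)
    (h : Real.sign a ≠ Real.sign b) :
    (a - δ) * (b - δ) < 0 ∨ (a + δ) * (b + δ) < 0 := by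
  have trich : ∀ c : ℝ, (c ≠ 0 → δ < |c|) → (c < -δ ∧ Real.sign c = -1) ∨
      (c = 0 ∧ Real.sign c = 0) ∨ (δ < c ∧ Real.sign c = 1) := by
    intro c hc
    rcases lt_trichotomy c 0 with h | h | h
    · have := hc h.ne
      rw [abs_of_neg h] at this
      exact Or.inl ⟨by linarith, Real.sign_of_neg h⟩
    · exact Or.inr (Or.inl ⟨h, by simp [h]⟩)
    · have := hc h.ne'
      rw [abs_of_pos h] at this
      exact Or.inr (Or.inr ⟨this, Real.sign_of_pos h⟩)
  rcases trich a ha with ⟨h1, e1⟩ | ⟨h1, e1⟩ | ⟨h1, e1⟩ <;>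
  rcases trich b hb with ⟨h2, e2⟩ | ⟨h2, e2⟩ | ⟨h2, e2⟩ <;>
  first
  | exact absurd (e1.trans e2.symm) h
  | (left; nlinarith)
  | (right; nlinarith)

end MilnorThom

open MilnorThom in
/-- **Milnor–Thom sign-pattern bound.** -/
theorem milnor_thom_sign_patterns (D : ℕ) (hD : 1 ≤ D) :
    ∃ C : ℝ, ∀ (N m : ℕ), 1 ≤ N → 1 ≤ m →
      ∀ p : Fin m → MvPolynomial (Fin N) ℝ,
        (∀ j, (p j).totalDegree ≤ D) →
        (({s : Fin m → ℝ |
            ∃ x : Fin N → ℝ, ∀ j, s j = Real.sign (MvPolynomial.eval x (p j))}.ncard : ℝ)) ≤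
          (C * (m : ℝ)) ^ N := by
  classical
  refine ⟨5 * D, fun N m _ hm p hp => ?_⟩
  set T := {s : Fin m → ℝ |
    ∃ x : Fin N → ℝ, ∀ j, s j = Real.sign (MvPolynomial.eval x (p j))} with hT
  have hfin : T.Finite := by
    refine (Set.Finite.pi (fun _ : Fin m => Set.toFinite ({-1, 0, 1} : Set ℝ))).subset ?_
    rintro s ⟨x, hx⟩ j -
    rw [hx j]
    rcases Real.sign_apply_eq (MvPolynomial.eval x (p j)) with h | h | h <;> simp [h]
  have : Fintype T := hfin.fintype
  choose y hy using fun s : T => s.2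
  obtain ⟨δ, hδ, hδy⟩ := exists_pos_mul_lt (κ := T × Fin m) (fun _ => 1)
    (fun k => if MvPolynomial.eval (y k.1) (p k.2) = 0 then 1
      else |MvPolynomial.eval (y k.1) (p k.2)|)
    (fun k => by split_ifs with h <;> simp [h])
  have hgap : ∀ (s : T) (j : Fin m), MvPolynomial.eval (y s) (p j) ≠ 0 →
      δ < |MvPolynomial.eval (y s) (p j)| := fun s j h => by
    simpa [h] using hδy (s, j)
  let q : Fin m ⊕ Fin m → MvPolynomial (Fin N) ℝ :=
    Sum.elim (fun j => p j - MvPolynomial.C δ) (fun j => p j + MvPolynomial.C δ)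
  have hq : ∀ j, (q j).totalDegree ≤ D := by
    rintro (j | j)
    · exact (MvPolynomial.totalDegree_sub_C_le _ _).trans (hp j)
    · exact (MvPolynomial.totalDegree_add _ _).trans (by simpa using hp j)
  have hdeg : (∏ j, q j).totalDegree ≤ 2 * m * D := by
    refine (MvPolynomial.totalDegree_finsetProd _ _).trans ?_
    refine (Finset.sum_le_sum fun j _ => hq j).trans (le_of_eq ?_)
    simp [two_mul]
  have hcard := card_le_of_separated q (2 * m * D) hdeg y
    (by
      rintro s (j | j) h0
      · have h1 : MvPolynomial.eval (y s) (p j) = δ := by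
          simpa [q, sub_eq_zero] using h0
        have := hgap s j (by rw [h1]; exact hδ.ne')
        rw [h1, abs_of_pos hδ] at this
        exact lt_irrefl _ this
      · have h1 : MvPolynomial.eval (y s) (p j) = -δ := by
          simpa [q, add_eq_zero_iff_eq_neg] using h0
        have := hgap s j (by rw [h1]; exact neg_ne_zero.mpr hδ.ne')
        rw [h1, abs_neg, abs_of_pos hδ] at this
        exact lt_irrefl _ this)
    (by
      intro s t hst
      obtain ⟨j, hj⟩ := Function.ne_iff.mp (fun h => hst (Subtype.ext h))
      rw [hy s j, hy t j] at hj
      rcases separated_of_sign_ne hδ (hgap s j) (hgap t j) hj with h | h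
      · exact ⟨Sum.inl j, by simpa [q] using h⟩
      · exact ⟨Sum.inr j, by simpa [q] using h⟩)
  rw [← Nat.card_eq_fintype_card, Nat.card_coe_set_eq] at hcard
  have hbase : 2 * (2 * m * D) + 1 ≤ 5 * D * m := by
    have : 1 ≤ m * D := Nat.mul_pos hm hD
    nlinarith
  have := hcard.trans (Nat.pow_le_pow_left hbase N)
  exact_mod_cast this
end
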